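/- Let n ≥ 1, ρ > 0, and let μ = exp(−V(x)) dx be a probability measure on Euclidean space ℝⁿ, where V : ℝⁿ → ℝ is smooth and the function x ↦ (ρ/2)|x|² − V(x) is convex (i.e. ∇²V ≤ ρ·Id). Then for every k ≥ 1, λ_k^Lip(ℝⁿ,|·|,μ) ≤ λ_k^Lip(ℝⁿ,|·|,γ_ρⁿ). -/

import Mathlib

open MeasureTheory Filter Topology ENNReal

/-- The local Lipschitz constant `|∇f|(x) = limsup_{y→x} |f(y)-f(x)|/d(y,x)`
(equal to `0` at isolated points, by the convention `Real.sInf ∅ = 0`). -/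
noncomputable def localLip {Ω : Type*} [PseudoMetricSpace Ω] (f : Ω → ℝ) (x : Ω) : ℝ :=
  Filter.limsup (fun y => |f y - f x| / dist y x) (nhdsWithin x {x}ᶜ)

/-- Membership in the metric Sobolev space `W^{1,2}_Lip(Ω,d,μ)`. -/
def memW12Lip {Ω : Type*} [PseudoMetricSpace Ω] [MeasurableSpace Ω]
    (μ : Measure Ω) (f : Ω → ℝ) : Prop :=
  LocallyLipschitz f ∧
    (∫⁻ x, ENNReal.ofReal ((f x) ^ 2) ∂μ) + (∫⁻ x, ENNReal.ofReal ((localLip f x) ^ 2) ∂μ) < ⊤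

/-- The `k`-th metric eigenvalue `λ_k^Lip(Ω,d,μ)`: the infimum over `k`-dimensional
linear subspaces `F ⊆ W^{1,2}_Lip` of the supremum of the Rayleigh quotient over `F`. -/
noncomputable def lambdaLip {Ω : Type*} [PseudoMetricSpace Ω] [MeasurableSpace Ω]
    (μ : Measure Ω) (k : ℕ) : ℝ :=
  sInf { a : ℝ | ∃ F : Submodule ℝ (Ω → ℝ), Module.finrank ℝ F = k ∧
    (∀ f ∈ F, memW12Lip μ f) ∧
    a = sSup { r : ℝ | ∃ f ∈ F, (∫ x, (f x) ^ 2 ∂μ) ≠ 0 ∧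
      r = (∫ x, (localLip f x) ^ 2 ∂μ) / (∫ x, (f x) ^ 2 ∂μ) } }

/-- The Gaussian probability measure `γ_ρⁿ` on `ℝⁿ`, with density proportional to
`exp(-ρ|x|²/2)` with respect to Lebesgue measure, normalized to total mass one. -/
noncomputable def gaussRho (n : ℕ) (ρ : ℝ) : Measure (EuclideanSpace ℝ (Fin n)) :=
  ((volume.withDensity fun x : EuclideanSpace ℝ (Fin n) =>
      ENNReal.ofReal (Real.exp (-ρ * ‖x‖ ^ 2 / 2))) Set.univ)⁻¹ •
    volume.withDensity fun x : EuclideanSpace ℝ (Fin n) =>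
      ENNReal.ofReal (Real.exp (-ρ * ‖x‖ ^ 2 / 2))



abbrev EE (n : ℕ) := EuclideanSpace ℝ (Fin n)

noncomputable def ebas {n : ℕ} (i : Fin n) : EE n := EuclideanSpace.single i 1

noncomputable def pd {n : ℕ} (i : Fin n) (f : EE n → ℝ) (x : EE n) : ℝ := fderiv ℝ f x (ebas i)

/-- polynomial functions of degree `< j` -/
noncomputable def PP (n : ℕ) : ℕ → Submodule ℝ (EE n → ℝ)
  | 0 => ⊥
  | j + 1 => Submodule.span ℝ ({fun _ => 1} ∪ {g | ∃ i : Fin n, ∃ f ∈ PP n j, g = fun x => x i * f x})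

theorem PP_zero {n : ℕ} {f : EE n → ℝ} (hf : f ∈ PP n 0) : f = 0 := by
  simpa [PP] using hf

theorem PP_one {n : ℕ} (j : ℕ) : (fun _ => 1) ∈ PP n (j+1) := by
  rw [PP]; exact Submodule.subset_span (Or.inl rfl)

theorem PP_const {n : ℕ} (j : ℕ) (c : ℝ) : (fun _ => c) ∈ PP n (j+1) := by
  have := (PP n (j+1)).smul_mem c (PP_one j)
  convert this using 1
  ext x; simp

theorem PP_mul {n : ℕ} {j : ℕ} (i : Fin n) {f : EE n → ℝ} (hf : f ∈ PP n j) :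
    (fun x => x i * f x) ∈ PP n (j+1) := by
  rw [PP]; exact Submodule.subset_span (Or.inr ⟨i, f, hf, rfl⟩)

theorem PP_induct {n j : ℕ} {M : (EE n → ℝ) → Prop} (h1 : M (fun _ => 1))
    (hm : ∀ (i : Fin n), ∀ f ∈ PP n j, M (fun x => x i * f x))
    (ha : ∀ f g, f ∈ PP n (j+1) → g ∈ PP n (j+1) → M f → M g → M (fun x => f x + g x))
    (hs : ∀ (c : ℝ) f, f ∈ PP n (j+1) → M f → M (fun x => c * f x)) :
    ∀ f ∈ PP n (j+1), M f := by
  intro f hf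
  have hf' := hf
  rw [PP] at hf'
  induction hf' using Submodule.span_induction with
  | mem x h =>
    rcases h with h | ⟨i, g, hg, rfl⟩
    · rw [Set.mem_singleton_iff] at h; rw [h]; exact h1
    · exact hm i g hg
  | zero =>
    have := hs 0 _ (PP_one j) h1
    simp only [zero_mul] at this
    exact this
  | add x y hx hy h1 h2 =>
    rw [← PP] at hx hy
    exact ha x y hx hy (h1 hx) (h2 hy)
  | smul a x hx h =>
    rw [← PP] at hx
    exact hs a x hx (h hx)

theorem PP_mono_succ {n : ℕ} (j : ℕ) : PP n j ≤ PP n (j+1) := by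
  induction j with
  | zero => intro f hf; rw [PP_zero hf]; exact Submodule.zero_mem _
  | succ j ih =>
    intro f hf
    refine PP_induct (M := fun f => f ∈ PP n (j+1+1)) (PP_one _) ?_ ?_ ?_ f hf
    · intro i f hf; exact PP_mul i (ih hf)
    · intro f g _ _ hf hg; exact Submodule.add_mem _ hf hg
    · intro c f _ hf; exact Submodule.smul_mem _ c hf

theorem PP_mono {n : ℕ} : Monotone (PP n) := monotone_nat_of_le_succ PP_mono_succ

noncomputable def mulX {n : ℕ} (i : Fin n) : (EE n → ℝ) →ₗ[ℝ] (EE n → ℝ) where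
  toFun f := fun x => x i * f x
  map_add' f g := by ext x; simp [mul_add]
  map_smul' c f := by ext x; simp; ring

instance PP_fin (n j : ℕ) : FiniteDimensional ℝ (PP n j) := by
  induction j with
  | zero => rw [PP]; infer_instance
  | succ j ih =>
    have : PP n (j+1) ≤ (Submodule.span ℝ {(fun _ => 1 : EE n → ℝ)}) ⊔ ⨆ i, (PP n j).map (mulX i) := by
      intro f hf
      refine PP_induct (M := fun f => f ∈ (Submodule.span ℝ {(fun _ => 1 : EE n → ℝ)}) ⊔ ⨆ i, (PP n j).map (mulX i)) ?_ ?_ ?_ ?_ f hf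
      · exact Submodule.mem_sup_left (Submodule.mem_span_singleton_self _)
      · intro i f hf
        exact Submodule.mem_sup_right (Submodule.mem_iSup_of_mem i ⟨f, hf, rfl⟩)
      · intro f g _ _ hf hg; exact Submodule.add_mem _ hf hg
      · intro c f _ hf; exact Submodule.smul_mem _ c hf
    exact Submodule.finiteDimensional_of_le this

theorem contDiff_coord {n : ℕ} (i : Fin n) : ContDiff ℝ (⊤:ℕ∞) (fun x : EE n => x i) := by
  exact (EuclideanSpace.proj (𝕜 := ℝ) i).contDiff

theorem PP_smooth {n j : ℕ} : ∀ {f : EE n → ℝ}, f ∈ PP n j → ContDiff ℝ (⊤ : ℕ∞) f := by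
  induction j with
  | zero => intro f hf; rw [PP_zero hf]; exact contDiff_const
  | succ j ih =>
    intro f hf
    refine PP_induct (M := fun f => ContDiff ℝ (⊤ : ℕ∞) f) contDiff_const ?_ ?_ ?_ f hf
    · intro i f hf; exact (contDiff_coord i).mul (ih hf)
    · intro f g _ _ hf hg; exact hf.add hg
    · intro c f _ hf; exact contDiff_const.mul hf

theorem PP_diff {n j : ℕ} {f : EE n → ℝ} (hf : f ∈ PP n j) : Differentiable ℝ f :=
  (PP_smooth hf).differentiable (by simp)

theorem fderiv_coord {n : ℕ} (i : Fin n) (x v : EE n) : fderiv ℝ (fun x : EE n => x i) x v = v i := by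
  have : HasFDerivAt (fun x : EE n => x i) (EuclideanSpace.proj (𝕜 := ℝ) i) x :=
    (EuclideanSpace.proj (𝕜 := ℝ) i).hasFDerivAt
  rw [this.fderiv]; rfl

theorem pd_coord {n : ℕ} (k i : Fin n) (x : EE n) : pd k (fun x : EE n => x i) x = if i = k then 1 else 0 := by
  rw [pd, fderiv_coord]; simp [ebas, Pi.single_apply]

theorem pd_mul {n : ℕ} (k : Fin n) {f g : EE n → ℝ} {x : EE n} (hf : DifferentiableAt ℝ f x)
    (hg : DifferentiableAt ℝ g x) : pd k (fun x => f x * g x) x = pd k f x * g x + f x * pd k g x := by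
  have := (hf.hasFDerivAt.mul hg.hasFDerivAt).fderiv
  simp only [pd]
  change fderiv ℝ (f * g) x _ = _
  rw [this]; simp; ring

theorem pd_add {n : ℕ} (k : Fin n) {f g : EE n → ℝ} {x : EE n} (hf : DifferentiableAt ℝ f x)
    (hg : DifferentiableAt ℝ g x) : pd k (fun x => f x + g x) x = pd k f x + pd k g x := by
  have := (hf.hasFDerivAt.add hg.hasFDerivAt).fderiv
  simp only [pd]
  change fderiv ℝ (f + g) x _ = _
  rw [this]; simp

theorem pd_sub {n : ℕ} (k : Fin n) {f g : EE n → ℝ} {x : EE n} (hf : DifferentiableAt ℝ f x)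
    (hg : DifferentiableAt ℝ g x) : pd k (fun x => f x - g x) x = pd k f x - pd k g x := by
  have := (hf.hasFDerivAt.sub hg.hasFDerivAt).fderiv
  simp only [pd]
  change fderiv ℝ (f - g) x _ = _
  rw [this]; simp

theorem pd_const {n : ℕ} (k : Fin n) (c : ℝ) (x : EE n) : pd k (fun _ => c) x = 0 := by
  simp [pd]

theorem pd_cmul {n : ℕ} (k : Fin n) (c : ℝ) {f : EE n → ℝ} {x : EE n} (hf : DifferentiableAt ℝ f x) :
    pd k (fun x => c * f x) x = c * pd k f x := by
  rw [pd_mul k (differentiableAt_const c) hf, pd_const]; ring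

theorem pd_sum {n : ℕ} (k : Fin n) {ι : Type*} (s : Finset ι) {f : ι → EE n → ℝ} {x : EE n}
    (hf : ∀ i ∈ s, DifferentiableAt ℝ (f i) x) :
    pd k (fun x => ∑ i ∈ s, f i x) x = ∑ i ∈ s, pd k (f i) x := by
  have := (HasFDerivAt.fun_sum (fun i hi => (hf i hi).hasFDerivAt)).fderiv
  simp only [pd]
  rw [this]; simp

theorem PP_pd {n j : ℕ} (k : Fin n) : ∀ {f : EE n → ℝ}, f ∈ PP n (j+1) → pd k f ∈ PP n j := by
  induction j with
  | zero =>
    intro f hf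
    refine PP_induct (M := fun f => pd k f ∈ PP n 0) ?_ ?_ ?_ ?_ f hf
    · have : pd k (fun _ : EE n => (1:ℝ)) = 0 := by ext x; simp [pd_const]
      rw [this]; exact Submodule.zero_mem _
    · intro i f hf
      rw [PP_zero hf]
      have : pd k (fun x : EE n => x i * (0 : EE n → ℝ) x) = 0 := by ext x; simp [pd_const]
      rw [this]; exact Submodule.zero_mem _
    · intro f g hf' hg' hf hg
      have : pd k (fun x => f x + g x) = pd k f + pd k g := by
        ext x; exact pd_add k (PP_diff hf' x) (PP_diff hg' x)
      rw [this]; exact Submodule.add_mem _ hf hg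
    · intro c f hf' hf
      have : pd k (fun x => c * f x) = c • pd k f := by
        ext x; exact pd_cmul k c (PP_diff hf' x)
      rw [this]; exact Submodule.smul_mem _ _ hf
  | succ j ih =>
    intro f hf
    refine PP_induct (M := fun f => pd k f ∈ PP n (j+1)) ?_ ?_ ?_ ?_ f hf
    · have : pd k (fun _ : EE n => (1:ℝ)) = 0 := by ext x; simp [pd_const]
      rw [this]; exact Submodule.zero_mem _
    · intro i f hf
      have : pd k (fun x : EE n => x i * f x) = (if i = k then (1:ℝ) else 0) • f + fun x => x i * pd k f x := by
        ext x
        rw [pd_mul k ((contDiff_coord i).differentiable (by simp) x) (PP_diff hf x), pd_coord]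
        split_ifs <;> simp
      rw [this]; exact Submodule.add_mem _ (Submodule.smul_mem _ _ hf) (PP_mul i (ih hf))
    · intro f g hf' hg' hf hg
      have : pd k (fun x => f x + g x) = pd k f + pd k g := by
        ext x; exact pd_add k (PP_diff hf' x) (PP_diff hg' x)
      rw [this]; exact Submodule.add_mem _ hf hg
    · intro c f hf' hf
      have : pd k (fun x => c * f x) = c • pd k f := by
        ext x; exact pd_cmul k c (PP_diff hf' x)
      rw [this]; exact Submodule.smul_mem _ _ hf

theorem sum_coord_pd {n : ℕ} (f : EE n → ℝ) (x v : EE n) : fderiv ℝ f x v = ∑ i, v i * pd i f x := by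
  have h : v = ∑ i, v i • ebas i := by
    ext j; simp [ebas, Pi.single_apply]
  conv_lhs => rw [h]
  simp [pd]

theorem PP_euler {n j : ℕ} : ∀ {f : EE n → ℝ}, f ∈ PP n (j+1) →
    (fun x => fderiv ℝ f x x - j * f x) ∈ PP n j := by
  induction j with
  | zero =>
    intro f hf
    have h0 : ∀ k, pd k f = 0 := fun k => PP_zero (PP_pd k hf)
    have : (fun x => fderiv ℝ f x x - (0:ℕ) * f x) = 0 := by
      ext x; rw [sum_coord_pd]; simp [h0]
    rw [this]; exact Submodule.zero_mem _
  | succ j ih =>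
    intro f hf
    refine PP_induct (M := fun f => (fun x => fderiv ℝ f x x - (j+1:ℕ) * f x) ∈ PP n (j+1)) ?_ ?_ ?_ ?_ f hf
    · simpa using PP_const j _
    · intro i f hf
      convert PP_mul i (ih hf) using 1
      ext x
      have hfd : fderiv ℝ (fun x : EE n => x i * f x) x x = x i * f x + x i * fderiv ℝ f x x := by
        have h1 : DifferentiableAt ℝ (fun x : EE n => x i) x := (contDiff_coord i).differentiable (by simp) x
        have := (h1.hasFDerivAt.mul (PP_diff hf x).hasFDerivAt).fderiv
        change fderiv ℝ ((fun x : EE n => x i) * f) x _ = _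
        rw [this]; simp [fderiv_coord]; ring
      rw [hfd]; push_cast; ring
    · intro f g hf' hg' hf hg
      convert Submodule.add_mem _ hf hg using 1
      ext x
      rw [fderiv_fun_add (PP_diff hf' x) (PP_diff hg' x)]; simp; ring
    · intro c f hf' hf
      convert Submodule.smul_mem _ c hf using 1
      ext x
      rw [fderiv_const_mul (PP_diff hf' x)]; simp; ring

theorem PP_lin_pow {n : ℕ} (t : EE n) (d : ℕ) : (fun x : EE n => (∑ i, t i * x i)^d) ∈ PP n (d+1) := by
  induction d with
  | zero => simpa using PP_one 0
  | succ d ih =>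
    have : (fun x : EE n => (∑ i, t i * x i)^(d+1)) = ∑ i, t i • (fun x => x i * (∑ i, t i * x i)^d) := by
      ext x; simp [pow_succ, Finset.mul_sum, Finset.sum_mul]
      refine Finset.sum_congr rfl fun i _ => by ring
    rw [this]
    exact Submodule.sum_mem _ fun i _ => Submodule.smul_mem _ _ (PP_mul i ih)

theorem PP_dim {n : ℕ} (hn : 1 ≤ n) (k : ℕ) : k ≤ Module.finrank ℝ (PP n k) := by
  let i0 : Fin n := ⟨0, hn⟩
  let T : Polynomial.degreeLT ℝ k →ₗ[ℝ] (EE n → ℝ) :=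
    { toFun := fun p x => (p : Polynomial ℝ).eval (x i0)
      map_add' := fun p q => by ext x; simp
      map_smul' := fun c q => by ext x; simp }
  have hT : Function.Injective T := by
    intro p q h
    apply Subtype.ext
    apply Polynomial.funext
    intro r
    have := congrFun h (EuclideanSpace.single i0 r)
    simpa [T] using this
  have hpow : ∀ d : ℕ, (fun x : EE n => (x i0)^d) ∈ PP n (d+1) := by
    intro d
    simpa [Pi.single_apply] using PP_lin_pow (EuclideanSpace.single i0 1) d
  have hr : ∀ p, T p ∈ PP n k := by
    rintro ⟨p, hp⟩
    have : T ⟨p, hp⟩ = ∑ d ∈ Finset.range k, p.coeff d • (fun x : EE n => (x i0)^d) := by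
      ext x
      simp [T]
      rcases eq_or_ne p 0 with rfl | h0
      · simp
      · rw [Polynomial.eval_eq_sum_range' ((Polynomial.natDegree_lt_iff_degree_lt h0).2 (Polynomial.mem_degreeLT.1 hp))]
    rw [this]
    refine Submodule.sum_mem _ fun d hd => Submodule.smul_mem _ _ ?_
    exact PP_mono (by simpa [Nat.succ_le_iff] using hd) (hpow d)
  have h1 : Module.finrank ℝ (Polynomial.degreeLT ℝ k) = k := by
    rw [(Polynomial.degreeLTEquiv ℝ k).finrank_eq]; simp
  rw [← h1]
  refine LinearMap.finrank_le_finrank_of_injective (f := T.codRestrict _ hr) ?_ |>.trans ?_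
  · intro p q h; exact hT (congrArg Subtype.val h)
  · rw [h1]


noncomputable def nu {n : ℕ} (W : EE n → ℝ) : Measure (EE n) :=
  volume.withDensity fun x => ENNReal.ofReal (Real.exp (-(W x)))

theorem meas_dens {n : ℕ} {W : EE n → ℝ} (hW : Continuous W) :
    Measurable (fun x => ENNReal.ofReal (Real.exp (-(W x)))) := by
  have := hW.measurable
  fun_prop

theorem integral_nu {n : ℕ} {W : EE n → ℝ} (hW : Continuous W) (f : EE n → ℝ) :
    ∫ x, f x ∂(nu W) = ∫ x, f x * Real.exp (-(W x)) := by
  rw [nu, integral_withDensity_eq_integral_toReal_smul (meas_dens hW) (by simp)]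
  refine integral_congr_ae (Eventually.of_forall fun x => ?_)
  simp [ENNReal.toReal_ofReal (Real.exp_pos _).le, mul_comm]

theorem integrable_nu {n : ℕ} {W : EE n → ℝ} (hW : Continuous W) (f : EE n → ℝ) :
    Integrable f (nu W) ↔ Integrable (fun x => f x * Real.exp (-(W x))) := by
  rw [nu, integrable_withDensity_iff_integrable_smul' (meas_dens hW) (by simp)]
  refine integrable_congr (Eventually.of_forall fun x => ?_)
  simp [ENNReal.toReal_ofReal (Real.exp_pos _).le, mul_comm]

def Decay {n : ℕ} (W : EE n → ℝ) : Prop :=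
  ∀ N : ℕ, ∃ C : ℝ, ∀ x, (1 + ‖x‖)^N * (1 + ‖fderiv ℝ W x‖)^2 * Real.exp (-(W x)) ≤ C

def GR {n : ℕ} (W : EE n → ℝ) (a : ℕ) (F : EE n → ℝ) : Prop :=
  Continuous F ∧ ∃ C : ℝ, ∃ N : ℕ, 0 ≤ C ∧ ∀ x, |F x| ≤ C * (1 + ‖x‖)^N * (1 + ‖fderiv ℝ W x‖)^a

section
variable {n : ℕ} {W : EE n → ℝ}

theorem GR.mono {a b : ℕ} {F : EE n → ℝ} (h : GR W a F) (hab : a ≤ b) : GR W b F := by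
  obtain ⟨hc, C, N, hC, hF⟩ := h
  refine ⟨hc, C, N, hC, fun x => (hF x).trans ?_⟩
  have : (1:ℝ) ≤ 1 + ‖fderiv ℝ W x‖ := by simp
  gcongr

theorem GR.add {a : ℕ} {F G : EE n → ℝ} (hF : GR W a F) (hG : GR W a G) : GR W a (fun x => F x + G x) := by
  obtain ⟨hc, C, N, hC, hF⟩ := hF
  obtain ⟨hc', C', N', hC', hG⟩ := hG
  refine ⟨hc.add hc', C + C', max N N', by positivity, fun x => ?_⟩
  have h1 : (1:ℝ) ≤ 1 + ‖x‖ := by simp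
  calc |F x + G x| ≤ |F x| + |G x| := abs_add_le _ _
    _ ≤ C * (1 + ‖x‖)^N * (1 + ‖fderiv ℝ W x‖)^a + C' * (1 + ‖x‖)^N' * (1 + ‖fderiv ℝ W x‖)^a :=
        add_le_add (hF x) (hG x)
    _ ≤ C * (1 + ‖x‖)^(max N N') * (1 + ‖fderiv ℝ W x‖)^a + C' * (1 + ‖x‖)^(max N N') * (1 + ‖fderiv ℝ W x‖)^a := by
        gcongr
        · exact le_max_left _ _
        · exact le_max_right _ _
    _ = _ := by ring

theorem GR.mul {a b : ℕ} {F G : EE n → ℝ} (hF : GR W a F) (hG : GR W b G) :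
    GR W (a + b) (fun x => F x * G x) := by
  obtain ⟨hc, C, N, hC, hF⟩ := hF
  obtain ⟨hc', C', N', hC', hG⟩ := hG
  refine ⟨hc.mul hc', C * C', N + N', by positivity, fun x => ?_⟩
  calc |F x * G x| = |F x| * |G x| := abs_mul _ _
    _ ≤ (C * (1 + ‖x‖)^N * (1 + ‖fderiv ℝ W x‖)^a) * (C' * (1 + ‖x‖)^N' * (1 + ‖fderiv ℝ W x‖)^b) :=
        mul_le_mul (hF x) (hG x) (abs_nonneg _) ((abs_nonneg _).trans (hF x))
    _ = _ := by ring

theorem GR.const (c : ℝ) : GR W 0 (fun _ => c) :=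
  ⟨continuous_const, |c|, 0, abs_nonneg _, fun x => by simp⟩

theorem GR.neg {a : ℕ} {F : EE n → ℝ} (hF : GR W a F) : GR W a (fun x => - F x) := by
  have := (GR.const (W := W) (-1)).mul hF
  simpa using this

theorem GR.sub {a : ℕ} {F G : EE n → ℝ} (hF : GR W a F) (hG : GR W a G) : GR W a (fun x => F x - G x) := by
  simpa [sub_eq_add_neg] using hF.add hG.neg

theorem GR.sum {a : ℕ} {ι : Type*} (s : Finset ι) {F : ι → EE n → ℝ} (hF : ∀ i ∈ s, GR W a (F i)) :
    GR W a (fun x => ∑ i ∈ s, F i x) := by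
  classical
  induction s using Finset.induction_on with
  | empty => simpa using (GR.const (W := W) 0).mono (Nat.zero_le a)
  | insert i s hi ih =>
    simp only [Finset.sum_insert hi]
    exact (hF i (by simp)).add (ih fun j hj => hF j (by simp [hj]))

theorem GR.pow {a : ℕ} {F : EE n → ℝ} (hF : GR W a F) : GR W (2*a) (fun x => F x ^ 2) := by
  have := hF.mul hF
  simpa [pow_two, two_mul] using this

theorem GR.coord (i : Fin n) : GR W 0 (fun x => x i) := by
  refine ⟨(contDiff_coord i).continuous, 1, 1, zero_le_one, fun x => ?_⟩
  have := PiLp.norm_apply_le x i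
  simp at this ⊢
  linarith

theorem PP_GR {j : ℕ} : ∀ {f : EE n → ℝ}, f ∈ PP n j → GR W 0 f := by
  induction j with
  | zero => intro f hf; rw [PP_zero hf]; exact GR.const 0
  | succ j ih =>
    intro f hf
    refine PP_induct (M := fun f => GR W 0 f) (GR.const _) ?_ ?_ ?_ f hf
    · intro i f hf; exact (GR.coord i).mul (ih hf)
    · intro f g _ _ hf hg; exact hf.add hg
    · intro c f _ hf; exact (GR.const c).mul hf

theorem norm_ebas (i : Fin n) : ‖ebas i‖ = 1 := by simp [ebas]

theorem abs_pd_le (i : Fin n) (f : EE n → ℝ) (x : EE n) : |pd i f x| ≤ ‖fderiv ℝ f x‖ := by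
  have := (fderiv ℝ f x).le_opNorm (ebas i)
  rwa [norm_ebas, mul_one] at this

theorem pd_smooth {f : EE n → ℝ} (hf : ContDiff ℝ (⊤:ℕ∞) f) (i : Fin n) : ContDiff ℝ (⊤:ℕ∞) (pd i f) := by
  have : ContDiff ℝ (⊤:ℕ∞) (fderiv ℝ f) := hf.fderiv_right (by simp)
  exact this.clm_apply contDiff_const

theorem smooth_diff {f : EE n → ℝ} (hf : ContDiff ℝ (⊤:ℕ∞) f) : Differentiable ℝ f :=
  hf.differentiable (by simp)

theorem GR.pdW (hW : ContDiff ℝ (⊤:ℕ∞) W) (i : Fin n) : GR W 1 (pd i W) := by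
  refine ⟨(pd_smooth hW i).continuous, 1, 0, zero_le_one, fun x => ?_⟩
  have := abs_pd_le i W x
  simp; linarith

theorem integrable_decay (n : ℕ) : Integrable (fun x : EE n => ((1 + ‖x‖)^(n+1))⁻¹) := by
  have := integrable_one_add_norm (E := EE n) (μ := volume) (r := (n+1:ℕ)) (by simp)
  refine this.congr (Eventually.of_forall fun x => ?_)
  simp only
  rw [Real.rpow_neg (by positivity), Real.rpow_natCast]

theorem GR.integrable (hW : Continuous W) (hd : Decay W) {a : ℕ} (ha : a ≤ 2) {F : EE n → ℝ} (hF : GR W a F) :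
    Integrable F (nu W) := by
  obtain ⟨hc, C, N, hC, hF⟩ := hF.mono ha
  obtain ⟨D, hD⟩ := hd (N + (n+1))
  rw [integrable_nu hW]
  refine Integrable.mono' ((integrable_decay n).const_mul (C * D)) (by
    exact (hc.mul (Real.continuous_exp.comp hW.neg)).aestronglyMeasurable) (Eventually.of_forall fun x => ?_)
  have hx : 0 < (1 + ‖x‖)^(n+1) := by positivity
  rw [Real.norm_eq_abs, abs_mul, Real.abs_exp, ← div_eq_mul_inv, le_div_iff₀ hx]
  calc |F x| * Real.exp (-(W x)) * (1 + ‖x‖)^(n+1)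
      ≤ (C * (1 + ‖x‖)^N * (1 + ‖fderiv ℝ W x‖)^2) * Real.exp (-(W x)) * (1 + ‖x‖)^(n+1) := by
        gcongr; exact hF x
    _ = C * ((1 + ‖x‖)^(N+(n+1)) * (1 + ‖fderiv ℝ W x‖)^2 * Real.exp (-(W x))) := by ring
    _ ≤ C * D := by gcongr; exact hD x

theorem pd_exp (hW : Differentiable ℝ W) (i : Fin n) (x : EE n) :
    fderiv ℝ (fun x => Real.exp (-(W x))) x (ebas i) = - (pd i W x * Real.exp (-(W x))) := by
  have := ((hW x).hasFDerivAt.neg.exp).fderiv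
  have h2 : fderiv ℝ (fun x => Real.exp (-(W x))) x = Real.exp (-(W x)) • - fderiv ℝ W x := this
  rw [h2]; simp [pd]; ring

/-- integration by parts -/
theorem ibp (hW : ContDiff ℝ (⊤:ℕ∞) W) (i : Fin n) {G : EE n → ℝ} (hG : Differentiable ℝ G)
    (h1 : Integrable G (nu W)) (h2 : Integrable (pd i G) (nu W))
    (h3 : Integrable (fun x => G x * pd i W x) (nu W)) :
    ∫ x, pd i G x ∂(nu W) = ∫ x, G x * pd i W x ∂(nu W) := by
  have hWd := smooth_diff hW
  rw [integral_nu hW.continuous, integral_nu hW.continuous]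
  rw [integrable_nu hW.continuous] at h1 h2 h3
  have := integral_mul_fderiv_eq_neg_fderiv_mul_of_integrable (μ := volume) (f := G)
    (g := fun x => Real.exp (-(W x))) (v := ebas i) h2 ?_ h1 (fun x _ => hG x) ?_
  · simp only [pd_exp hWd] at this
    simp only [mul_neg, integral_neg, neg_inj] at this
    simp only [pd] at this ⊢
    rw [← this]
    refine integral_congr_ae (Eventually.of_forall fun x => ?_)
    simp only; ring
  · simp only [pd_exp hWd]
    refine h3.neg.congr (Eventually.of_forall fun x => ?_)
    simp; ring
  · intro x _
    exact (hWd x).neg.exp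

theorem integrable_compact (hW : Continuous W) {G : EE n → ℝ} (hG : Continuous G) (hc : HasCompactSupport G) :
    Integrable G (nu W) := by
  rw [integrable_nu hW]
  refine Continuous.integrable_of_hasCompactSupport (hG.mul (Real.continuous_exp.comp hW.neg)) hc.mul_right

theorem pd_compact {G : EE n → ℝ} (hc : HasCompactSupport G) (i : Fin n) : HasCompactSupport (pd i G) :=
  (hc.fderiv (𝕜 := ℝ)).comp_left (g := fun L : EE n →L[ℝ] ℝ => L (ebas i)) (by simp)

theorem ibp_compact (hW : ContDiff ℝ (⊤:ℕ∞) W) (i : Fin n) {G : EE n → ℝ} (hG : ContDiff ℝ (⊤:ℕ∞) G)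
    (hc : HasCompactSupport G) :
    ∫ x, pd i G x ∂(nu W) = ∫ x, G x * pd i W x ∂(nu W) := by
  refine ibp hW i (smooth_diff hG) (integrable_compact hW.continuous hG.continuous hc) ?_ ?_
  · exact integrable_compact hW.continuous (pd_smooth hG i).continuous (pd_compact hc i)
  · exact integrable_compact hW.continuous (hG.continuous.mul (pd_smooth hW i).continuous) hc.mul_right

end

theorem exists_cutoff (n : ℕ) : ∃ χ : ℕ → EE n → ℝ, ∃ C : ℝ, (∀ R, ContDiff ℝ (⊤:ℕ∞) (χ R)) ∧
    (∀ R, HasCompactSupport (χ R)) ∧ (∀ R x, 0 ≤ χ R x) ∧ (∀ R x, χ R x ≤ 1) ∧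
    (∀ x, Tendsto (fun R => χ R x) atTop (𝓝 1)) ∧ (∀ R i x, |pd i (χ R) x| ≤ C) ∧
    (∀ i x, Tendsto (fun R => pd i (χ R) x) atTop (𝓝 0)) := by
  let b : ContDiffBump (0 : EE n) := ⟨1, 2, by norm_num, by norm_num⟩
  have hb : ContDiff ℝ (⊤:ℕ∞) b := b.contDiff
  obtain ⟨C, hC⟩ := (b.hasCompactSupport.fderiv (𝕜 := ℝ)).exists_bound_of_continuous
    (hb.continuous_fderiv (by simp))
  let χ : ℕ → EE n → ℝ := fun R x => b ((R+1:ℝ)⁻¹ • x)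
  have hsm : ∀ R, ContDiff ℝ (⊤:ℕ∞) (χ R) := fun R => hb.comp (contDiff_const_smul _)
  have hpd : ∀ R i x, |pd i (χ R) x| ≤ (R+1:ℝ)⁻¹ * C := by
    intro R i x
    have h1 : HasFDerivAt (χ R) ((fderiv ℝ b ((R+1:ℝ)⁻¹ • x)).comp ((R+1:ℝ)⁻¹ • ContinuousLinearMap.id ℝ (EE n))) x := by
      have hbd : DifferentiableAt ℝ b ((R+1:ℝ)⁻¹ • x) := smooth_diff hb _
      have h2 : HasFDerivAt (fun x : EE n => (R+1:ℝ)⁻¹ • x) ((R+1:ℝ)⁻¹ • ContinuousLinearMap.id ℝ (EE n)) x :=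
        ((R+1:ℝ)⁻¹ • ContinuousLinearMap.id ℝ (EE n)).hasFDerivAt
      exact hbd.hasFDerivAt.comp x h2
    rw [pd, h1.fderiv]
    simp only [ContinuousLinearMap.comp_apply, smul_apply, ContinuousLinearMap.id_apply, map_smul, smul_eq_mul]
    rw [abs_mul, abs_of_nonneg (by positivity)]
    gcongr
    exact (abs_pd_le i b _).trans (hC _)
  have hC0 : 0 ≤ C := (norm_nonneg _).trans (hC 0)
  refine ⟨χ, C, hsm, ?_, fun R x => b.nonneg, fun R x => b.le_one, ?_, ?_, ?_⟩
  · intro R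
    exact b.hasCompactSupport.comp_homeomorph (Homeomorph.smulOfNeZero (R+1:ℝ)⁻¹ (by positivity))
  · intro x
    refine tendsto_const_nhds.congr' ?_
    filter_upwards [eventually_ge_atTop ⌈‖x‖⌉₊] with R hR
    symm
    apply b.one_of_mem_closedBall
    have h1 : ‖x‖ ≤ R := Nat.ceil_le.1 hR
    simp only [mem_closedBall_zero_iff, norm_smul, b]
    rw [Real.norm_of_nonneg (by positivity), inv_mul_le_iff₀ (by positivity)]
    linarith
  · intro R i x
    refine (hpd R i x).trans ?_
    have : (R+1:ℝ)⁻¹ ≤ 1 := inv_le_one_of_one_le₀ (by simp)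
    nlinarith
  · intro i x
    refine squeeze_zero_norm (fun R => hpd R i x) ?_
    have : Tendsto (fun R : ℕ => (R+1:ℝ)⁻¹ * C) atTop (𝓝 (0 * C)) := by
      refine Tendsto.mul_const _ ?_
      simpa [one_div] using tendsto_one_div_add_atTop_nhds_zero_nat (𝕜 := ℝ)
    simpa using this


section
variable {n : ℕ} {W : EE n → ℝ}

theorem pd_pd {f : EE n → ℝ} (hf : ContDiff ℝ (⊤:ℕ∞) f) (i j : Fin n) (x : EE n) :
    pd i (pd j f) x = fderiv ℝ (fderiv ℝ f) x (ebas i) (ebas j) := by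
  have h1 : ContDiff ℝ (⊤:ℕ∞) (fderiv ℝ f) := hf.fderiv_right (by simp)
  have h2 : DifferentiableAt ℝ (fderiv ℝ f) x := h1.differentiable (by simp) x
  have h3 := (h2.hasFDerivAt.clm_apply (hasFDerivAt_const (ebas j) x)).fderiv
  rw [pd]
  change fderiv ℝ (fun y => fderiv ℝ f y (ebas j)) x _ = _
  rw [h3]; simp

theorem pd_symm {f : EE n → ℝ} (hf : ContDiff ℝ (⊤:ℕ∞) f) (i j : Fin n) (x : EE n) :
    pd i (pd j f) x = pd j (pd i f) x := by
  rw [pd_pd hf, pd_pd hf]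
  exact (hf.contDiffAt.isSymmSndFDerivAt (by rw [minSmoothness_of_isRCLikeNormedField]; exact WithTop.coe_le_coe.2 le_top)) _ _

theorem normsq_sum (v : EE n) : ‖v‖^2 = ∑ i, v i ^ 2 := by
  rw [EuclideanSpace.real_norm_sq_eq]

theorem vec_sum (v : EE n) : v = ∑ i, v i • ebas i := by
  ext j; simp [ebas, Pi.single_apply]

theorem line_deriv_conv (hW : ContDiff ℝ (⊤:ℕ∞) W) (ρ : ℝ) (x v : EE n) (t : ℝ) :
    HasDerivAt (fun t : ℝ => ρ / 2 * ‖x + t • v‖^2 - W (x + t • v))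
      (ρ * (inner ℝ x v + t * ‖v‖^2) - fderiv ℝ W (x + t • v) v) t := by
  have hl : HasDerivAt (fun t : ℝ => x + t • v) v t := by
    simpa using ((hasDerivAt_id t).smul_const v).const_add x
  have h1 := (hl.norm_sq).const_mul (ρ/2)
  have h2 : HasDerivAt (fun t : ℝ => W (x + t • v)) (fderiv ℝ W (x + t • v) v) t :=
    (smooth_diff hW _).hasFDerivAt.comp_hasDerivAt t hl
  refine (h1.sub h2).congr_deriv ?_
  rw [inner_add_left, inner_smul_left, real_inner_self_eq_norm_sq]
  simp; ring

theorem line_conv {ρ : ℝ}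
    (hconv : ConvexOn ℝ Set.univ (fun x : EE n => ρ / 2 * ‖x‖ ^ 2 - W x)) (x v : EE n) :
    ConvexOn ℝ Set.univ (fun t : ℝ => ρ / 2 * ‖x + t • v‖^2 - W (x + t • v)) := by
  have := hconv.comp_affineMap (AffineMap.lineMap x (x + v))
  have e : (fun t : ℝ => ρ / 2 * ‖x + t • v‖^2 - W (x + t • v)) =
      (fun x : EE n => ρ / 2 * ‖x‖ ^ 2 - W x) ∘ (AffineMap.lineMap x (x + v) : ℝ →ᵃ[ℝ] EE n) := by
    ext t; simp [AffineMap.lineMap_apply, add_comm]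
  rw [e]; exact this

theorem hess_bound (hW : ContDiff ℝ (⊤:ℕ∞) W) {ρ : ℝ}
    (hconv : ConvexOn ℝ Set.univ (fun x : EE n => ρ / 2 * ‖x‖ ^ 2 - W x)) (x : EE n) (v : Fin n → ℝ) :
    ∑ i, ∑ j, v i * v j * pd i (pd j W) x ≤ ρ * ∑ i, v i ^ 2 := by
  let u : EE n := WithLp.toLp 2 v
  have hc := line_conv hconv x u
  have hmono : Monotone (deriv (fun t : ℝ => ρ / 2 * ‖x + t • u‖^2 - W (x + t • u))) := by
    rw [← monotoneOn_univ]
    exact hc.monotoneOn_deriv fun t _ => (line_deriv_conv hW ρ x u t).differentiableAt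
  have heq : deriv (fun t : ℝ => ρ / 2 * ‖x + t • u‖^2 - W (x + t • u)) =
      fun t => ρ * (inner ℝ x u + t * ‖u‖^2) - fderiv ℝ W (x + t • u) u := by
    ext t; exact (line_deriv_conv hW ρ x u t).deriv
  rw [heq] at hmono
  have h0 := hmono.deriv_nonneg (x := 0)
  have h1 : ContDiff ℝ (⊤:ℕ∞) (fderiv ℝ W) := hW.fderiv_right (by simp)
  have h2 : DifferentiableAt ℝ (fderiv ℝ W) (x + (0:ℝ) • u) := h1.differentiable (by simp) _
  have hl : HasDerivAt (fun t : ℝ => x + t • u) u 0 := by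
    simpa using ((hasDerivAt_id (0:ℝ)).smul_const u).const_add x
  have h3 : HasDerivAt (fun t : ℝ => fderiv ℝ W (x + t • u) u) (fderiv ℝ (fderiv ℝ W) x u u) 0 := by
    rw [zero_smul, add_zero] at h2
    have e : x = x + (0:ℝ) • u := by rw [zero_smul, add_zero]
    have h2' : HasFDerivAt (fderiv ℝ W) (fderiv ℝ (fderiv ℝ W) x) (x + (0:ℝ) • u) := by
      rw [← e]; exact h2.hasFDerivAt
    have h5 := h2'.comp_hasDerivAt (0:ℝ) hl
    exact (ContinuousLinearMap.apply ℝ ℝ u).hasFDerivAt.comp_hasDerivAt (0:ℝ) h5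
  have h4 : HasDerivAt (fun t : ℝ => ρ * (inner ℝ x u + t * ‖u‖^2)) (ρ * ‖u‖^2) 0 := by
    simpa using (((hasDerivAt_id (0:ℝ)).mul_const (‖u‖^2)).const_add (inner ℝ x u)).const_mul ρ
  have h5 := (h4.sub h3).deriv
  have h6 : 0 ≤ ρ * ‖u‖^2 - fderiv ℝ (fderiv ℝ W) x u u := by
    rw [← h5]; exact h0
  have h7 : fderiv ℝ (fderiv ℝ W) x u u = ∑ i, ∑ j, v i * v j * pd i (pd j W) x := by
    have : fderiv ℝ (fderiv ℝ W) x u u = fderiv ℝ (fderiv ℝ W) x (∑ i, u i • ebas i) (∑ i, u i • ebas i) := by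
      rw [← vec_sum]
    rw [this]
    simp only [map_sum, map_smul, sum_apply, smul_apply, pd_pd hW, smul_eq_mul]
    refine Finset.sum_congr rfl fun i _ => ?_
    rw [Finset.mul_sum]
    refine Finset.sum_congr rfl fun j _ => ?_
    rw [← pd_pd hW, ← pd_pd hW, pd_symm hW]
    simp only [u]; ring
  have h8 : ‖u‖^2 = ∑ i, v i ^2 := normsq_sum u
  rw [h7, h8] at h6; linarith

/-- `-L f` -/
noncomputable def Lop (W f : EE n → ℝ) (x : EE n) : ℝ := ∑ i, (pd i f x * pd i W x - pd i (pd i f) x)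

theorem Lop_GR (hW : ContDiff ℝ (⊤:ℕ∞) W) {j : ℕ} {f : EE n → ℝ} (hf : f ∈ PP n (j+1+1)) :
    GR W 1 (Lop W f) := by
  refine GR.sum _ fun i _ => ?_
  exact ((PP_GR (PP_pd i hf)).mul (GR.pdW hW i)).sub ((PP_GR (PP_pd i (PP_pd i hf))).mono zero_le_one)

theorem Lop_smooth (hW : ContDiff ℝ (⊤:ℕ∞) W) {f : EE n → ℝ} (hf : ContDiff ℝ (⊤:ℕ∞) f) :
    ContDiff ℝ (⊤:ℕ∞) (Lop W f) := by
  refine ContDiff.sum fun i _ => ?_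
  exact ((pd_smooth hf i).mul (pd_smooth hW i)).sub (pd_smooth (pd_smooth hf i) i)

theorem pd_Lop (hW : ContDiff ℝ (⊤:ℕ∞) W) {f : EE n → ℝ} (hf : ContDiff ℝ (⊤:ℕ∞) f) (i : Fin n) (x : EE n) :
    pd i (Lop W f) x = ∑ j, (pd i (pd j f) x * pd j W x + pd j f x * pd i (pd j W) x - pd i (pd j (pd j f)) x) := by
  have d1 := fun j => smooth_diff (pd_smooth hf j)
  have d2 := fun j => smooth_diff (pd_smooth hW j)
  have d3 := fun j => smooth_diff (pd_smooth (pd_smooth hf j) j)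
  have d4 : ∀ j, DifferentiableAt ℝ (fun x => pd j f x * pd j W x) x := fun j => (d1 j x).mul (d2 j x)
  have := pd_sum i (x := x) Finset.univ (f := fun j x => pd j f x * pd j W x - pd j (pd j f) x)
    (fun j _ => ((d1 j x).mul (d2 j x)).sub (d3 j x))
  change pd i (fun x => ∑ j, (pd j f x * pd j W x - pd j (pd j f) x)) x = _
  rw [this]
  refine Finset.sum_congr rfl fun j _ => ?_
  rw [pd_sub i (d4 j) (d3 j x), pd_mul i (d1 j x) (d2 j x)]

/-- Green formula -/
theorem green (hW : ContDiff ℝ (⊤:ℕ∞) W) (hd : Decay W) {j k : ℕ} {f g : EE n → ℝ} (hf : f ∈ PP n (j+1+1))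
    (hg : g ∈ PP n (k+1)) :
    ∫ x, ∑ i, pd i g x * pd i f x ∂(nu W) = ∫ x, g x * Lop W f x ∂(nu W) := by
  have hWc := hW.continuous
  have key : ∀ i, ∫ x, (pd i g x * pd i f x + g x * pd i (pd i f) x) ∂(nu W)
      = ∫ x, (g x * pd i f x) * pd i W x ∂(nu W) := by
    intro i
    have h1 := ibp hW i (G := fun x => g x * pd i f x) ((PP_diff hg).mul (PP_diff (PP_pd i hf)))
      (((PP_GR hg).mul (PP_GR (PP_pd i hf))).integrable hWc hd (by norm_num)) ?_
      ((((PP_GR hg).mul (PP_GR (PP_pd i hf))).mul (GR.pdW hW i)).integrable hWc hd (by norm_num))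
    · rw [← h1]
      refine integral_congr_ae (Eventually.of_forall fun x => ?_)
      exact (pd_mul i (PP_diff hg x) (PP_diff (PP_pd i hf) x)).symm
    · have : pd i (fun x => g x * pd i f x) = fun x => pd i g x * pd i f x + g x * pd i (pd i f) x := by
        ext x; exact (pd_mul i (PP_diff hg x) (PP_diff (PP_pd i hf) x))
      rw [this]
      exact (((PP_GR (PP_pd i hg)).mul (PP_GR (PP_pd i hf))).add
        ((PP_GR hg).mul (PP_GR (PP_pd i (PP_pd i hf))))).integrable hWc hd (by norm_num)
  have hi1 : ∀ i, Integrable (fun x => pd i g x * pd i f x) (nu W) := fun i =>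
    ((PP_GR (PP_pd i hg)).mul (PP_GR (PP_pd i hf))).integrable hWc hd (by norm_num)
  have hi2 : ∀ i, Integrable (fun x => g x * pd i (pd i f) x) (nu W) := fun i =>
    ((PP_GR hg).mul (PP_GR (PP_pd i (PP_pd i hf)))).integrable hWc hd (by norm_num)
  have hi3 : ∀ i, Integrable (fun x => (g x * pd i f x) * pd i W x) (nu W) := fun i =>
    (((PP_GR hg).mul (PP_GR (PP_pd i hf))).mul (GR.pdW hW i)).integrable hWc hd (by norm_num)
  rw [integral_finsetSum _ (fun i _ => hi1 i)]
  have : ∀ x, g x * Lop W f x = ∑ i, ((g x * pd i f x) * pd i W x - g x * pd i (pd i f) x) := by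
    intro x; rw [Lop, Finset.mul_sum]; refine Finset.sum_congr rfl fun i _ => by ring
  simp only [this]
  have hi4 : ∀ i, Integrable (fun x => (g x * pd i f x) * pd i W x - g x * pd i (pd i f) x) (nu W) :=
    fun i => (hi3 i).sub (hi2 i)
  rw [integral_finsetSum _ (fun i _ => hi4 i)]
  refine Finset.sum_congr rfl fun i _ => ?_
  have k := key i
  rw [integral_add (hi1 i) (hi2 i)] at k
  rw [integral_sub (hi3 i) (hi2 i)]; linarith

theorem bochner (hW : ContDiff ℝ (⊤:ℕ∞) W) (hd : Decay W) {ρ : ℝ}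
    (hconv : ConvexOn ℝ Set.univ (fun x : EE n => ρ / 2 * ‖x‖ ^ 2 - W x)) {j : ℕ}
    {f : EE n → ℝ} (hf' : f ∈ PP n (j+1)) :
    ∫ x, (Lop W f x)^2 ∂(nu W) ≤ ρ * ∫ x, ∑ i, (pd i f x)^2 ∂(nu W)
      + ∑ j, ∫ x, ∑ i, (pd i (pd j f) x)^2 ∂(nu W) := by
  have hWc := hW.continuous
  have hf : f ∈ PP n (j+1+1+1) := PP_mono (by omega) hf'
  have hfs := PP_smooth hf
  obtain ⟨χ, C, hχs, hχc, hχ0, hχ1, hχt, hχd, hχdt⟩ := exists_cutoff n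
  set u := Lop W f with hu
  have hus : ContDiff ℝ (⊤:ℕ∞) u := Lop_smooth hW hfs
  have huG : GR W 1 u := Lop_GR hW hf
  have d1 := fun j => smooth_diff (pd_smooth hfs j)
  have d2 := fun i j => smooth_diff (pd_smooth (pd_smooth hfs j) i)
  let K : EE n → ℝ := fun x => ρ * (∑ i, (pd i f x)^2) +
    ∑ i, ∑ j, (pd i f x * pd i (pd j f) x * pd j W x - pd i f x * pd i (pd j (pd j f)) x)
  have g1 : ∀ i, GR W 0 (pd i f) := fun i => PP_GR (PP_pd i hf)
  have g2 : ∀ i j, GR W 0 (pd i (pd j f)) := fun i j => PP_GR (PP_pd i (PP_pd j hf))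
  have g3 : ∀ i j k, GR W 0 (pd i (pd j (pd k f))) := fun i j k => PP_GR (PP_pd i (PP_pd j (PP_pd k hf)))
  have hKa : GR W 0 (fun x => ∑ i, (pd i f x)^2) := GR.sum _ fun i _ => (g1 i).pow
  have hKb : ∀ i j, GR W 1 (fun x => pd i f x * pd i (pd j f) x * pd j W x) :=
    fun i j => (((g1 i).mul (g2 i j)).mul (GR.pdW hW j))
  have hKc : ∀ i j, GR W 0 (fun x => pd i f x * pd i (pd j (pd j f)) x) :=
    fun i j => ((g1 i).mul (g3 i j j))
  have hKG : GR W 1 K := by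
    refine GR.add (((GR.const ρ).mul hKa).mono (by norm_num)) ?_
    exact GR.sum _ fun i _ => GR.sum _ fun j _ => (hKb i j).sub ((hKc i j).mono (by norm_num))
  have hKpt : ∀ x, ∑ i, pd i f x * pd i u x ≤ K x := by
    intro x
    have := hess_bound hW hconv x (fun i => pd i f x)
    have e : ∑ i, pd i f x * pd i u x = ∑ i, ∑ j, pd i f x * pd j f x * pd i (pd j W) x +
      ∑ i, ∑ j, (pd i f x * pd i (pd j f) x * pd j W x - pd i f x * pd i (pd j (pd j f)) x) := by
      rw [← Finset.sum_add_distrib]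
      refine Finset.sum_congr rfl fun i _ => ?_
      rw [hu, pd_Lop hW hfs, Finset.mul_sum, ← Finset.sum_add_distrib]
      refine Finset.sum_congr rfl fun j _ => by ring
    rw [e]
    simp only [K]
    linarith
  -- step with cutoff
  have step : ∀ R, ∫ x, χ R x * u x ^ 2 ∂(nu W) ≤
      ∫ x, ((∑ i, u x * pd i f x * pd i (χ R) x) + χ R x * K x) ∂(nu W) := by
    intro R
    have hG : ∀ i, ContDiff ℝ (⊤:ℕ∞) (fun x => χ R x * (u x * pd i f x)) := fun i =>
      (hχs R).mul (hus.mul (pd_smooth hfs i))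
    have hGc : ∀ i, HasCompactSupport (fun x => χ R x * (u x * pd i f x)) := fun i => (hχc R).mul_right
    have h1 : ∀ i, ∫ x, pd i (fun x => χ R x * (u x * pd i f x)) x ∂(nu W) =
       ∫ x, χ R x * (u x * pd i f x) * pd i W x ∂(nu W) := fun i => ibp_compact hW i (hG i) (hGc i)
    have i1 : ∀ i, Integrable (fun x => pd i (fun x => χ R x * (u x * pd i f x)) x) (nu W) := fun i =>
      integrable_compact hWc (pd_smooth (hG i) i).continuous (pd_compact (hGc i) i)
    have i2 : ∀ i, Integrable (fun x => χ R x * (u x * pd i f x) * pd i W x) (nu W) := fun i =>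
      integrable_compact hWc ((hG i).continuous.mul (pd_smooth hW i).continuous) (hGc i).mul_right
    have h2 : ∫ x, ∑ i, pd i (fun x => χ R x * (u x * pd i f x)) x ∂(nu W) =
       ∫ x, ∑ i, χ R x * (u x * pd i f x) * pd i W x ∂(nu W) := by
      rw [integral_finsetSum _ fun i _ => i1 i, integral_finsetSum _ fun i _ => i2 i]
      exact Finset.sum_congr rfl fun i _ => h1 i
    have i3 : ∀ i, Integrable (fun x => χ R x * u x * pd i (pd i f) x) (nu W) := fun i =>
      integrable_compact hWc (((hχs R).mul hus).mul (pd_smooth (pd_smooth hfs i) i)).continuous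
        (hχc R).mul_right.mul_right
    have e1 : ∫ x, χ R x * u x ^ 2 ∂(nu W) =
        ∫ x, (∑ i, χ R x * (u x * pd i f x) * pd i W x) - ∑ i, χ R x * u x * pd i (pd i f) x ∂(nu W) := by
      refine integral_congr_ae (Eventually.of_forall fun x => ?_)
      simp only
      have hux : u x = ∑ i, (pd i f x * pd i W x - pd i (pd i f) x) := rfl
      have : χ R x * u x ^ 2 = χ R x * u x * ∑ i, (pd i f x * pd i W x - pd i (pd i f) x) := by
        rw [← hux]; ring
      rw [this, ← Finset.sum_sub_distrib, Finset.mul_sum]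
      refine Finset.sum_congr rfl fun i _ => ?_
      ring
    rw [e1, integral_sub (integrable_finsetSum _ fun i _ => i2 i) (integrable_finsetSum _ fun i _ => i3 i),
      ← h2, ← integral_sub (integrable_finsetSum _ fun i _ => i1 i) (integrable_finsetSum _ fun i _ => i3 i)]
    refine integral_mono ((integrable_finsetSum _ fun i _ => i1 i).sub (integrable_finsetSum _ fun i _ => i3 i)) ?_ ?_
    · refine Integrable.add (integrable_finsetSum _ fun i _ => ?_) ?_
      · exact integrable_compact hWc ((hus.mul (pd_smooth hfs i)).continuous.mul (pd_smooth (hχs R) i).continuous)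
          (pd_compact (hχc R) i).mul_left
      · exact integrable_compact hWc ((hχs R).continuous.mul hKG.1) (hχc R).mul_right
    · intro x
      have hp : ∀ i, pd i (fun x => χ R x * (u x * pd i f x)) x = u x * pd i f x * pd i (χ R) x +
          χ R x * (pd i f x * pd i u x) + χ R x * u x * pd i (pd i f) x := by
        intro i
        have d5 : DifferentiableAt ℝ (fun x => u x * pd i f x) x := (smooth_diff hus x).mul (d1 i x)
        rw [pd_mul i (smooth_diff (hχs R) x) d5,
          pd_mul i (smooth_diff hus x) (d1 i x)]
        ring
      simp only [hp, Finset.sum_add_distrib]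
      rw [← Finset.mul_sum Finset.univ _ (χ R x)]
      have := mul_le_mul_of_nonneg_left (hKpt x) (hχ0 R x)
      linarith
  -- limit
  have huint : Integrable (fun x => u x ^ 2) (nu W) := huG.pow.integrable hWc hd (by norm_num)
  have hKint : Integrable K (nu W) := hKG.integrable hWc hd (by norm_num)
  have huf : ∀ i, Integrable (fun x => u x * pd i f x) (nu W) := fun i =>
    (huG.mul (g1 i)).integrable hWc hd (by norm_num)
  have lim1 : Tendsto (fun R => ∫ x, χ R x * u x ^ 2 ∂(nu W)) atTop (𝓝 (∫ x, u x ^ 2 ∂(nu W))) := by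
    refine tendsto_integral_of_dominated_convergence (fun x => u x ^ 2) (fun R => ?_) huint (fun R => ?_) ?_
    · exact ((hχs R).continuous.mul (hus.continuous.pow 2)).aestronglyMeasurable
    · refine Eventually.of_forall fun x => ?_
      rw [Real.norm_of_nonneg (mul_nonneg (hχ0 R x) (sq_nonneg _))]
      exact mul_le_of_le_one_left (sq_nonneg _) (hχ1 R x)
    · refine Eventually.of_forall fun x => ?_
      simpa using (hχt x).mul_const (u x ^ 2)
  have lim2 : Tendsto (fun R => ∫ x, ((∑ i, u x * pd i f x * pd i (χ R) x) + χ R x * K x) ∂(nu W)) atTop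
      (𝓝 (∫ x, K x ∂(nu W))) := by
    refine tendsto_integral_of_dominated_convergence (fun x => (∑ i, |u x * pd i f x| * C) + |K x|)
      (fun R => ?_) ?_ (fun R => ?_) ?_
    · refine Continuous.aestronglyMeasurable (Continuous.add ?_ ((hχs R).continuous.mul hKG.1))
      exact continuous_finsetSum _ fun i _ => (hus.continuous.mul (pd_smooth hfs i).continuous).mul
        (pd_smooth (hχs R) i).continuous
    · exact (integrable_finsetSum _ fun i _ => (huf i).abs.mul_const C).add hKint.abs
    · refine Eventually.of_forall fun x => ?_
      refine (norm_add_le _ _).trans (add_le_add ((norm_sum_le _ _).trans (Finset.sum_le_sum fun i _ => ?_)) ?_)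
      · rw [Real.norm_eq_abs, abs_mul (u x * pd i f x)]
        exact mul_le_mul_of_nonneg_left (hχd R i x) (abs_nonneg _)
      · rw [Real.norm_eq_abs, abs_mul, abs_of_nonneg (hχ0 R x)]
        exact mul_le_of_le_one_left (abs_nonneg _) (hχ1 R x)
    · refine Eventually.of_forall fun x => ?_
      have t1 : Tendsto (fun R => ∑ i, u x * pd i f x * pd i (χ R) x) atTop (𝓝 (∑ i : Fin n, u x * pd i f x * 0)) :=
        tendsto_finsetSum _ fun i _ => (hχdt i x).const_mul _
      have t2 := t1.add ((hχt x).mul_const (K x))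
      simpa using t2
  refine (le_of_tendsto_of_tendsto' lim1 lim2 step).trans (le_of_eq ?_)
  -- compute the integral of K
  have ib := fun i j => (hKb i j).integrable hWc hd (by norm_num)
  have ic := fun i j => (hKc i j).integrable hWc hd (by norm_num)
  have id : ∀ i j, Integrable (fun x => pd i f x * pd i (pd j f) x * pd j W x - pd i f x * pd i (pd j (pd j f)) x) (nu W) :=
    fun i j => (ib i j).sub (ic i j)
  have ia := hKa.integrable hWc hd (by norm_num)
  simp only [K]
  rw [integral_add (ia.const_mul ρ) (integrable_finsetSum _ fun i _ => integrable_finsetSum _ fun j _ => id i j),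
    integral_const_mul]
  congr 1
  rw [integral_finsetSum _ fun i _ => integrable_finsetSum _ fun j _ => id i j]
  have i22 : ∀ i j, Integrable (fun x => (pd i (pd j f) x)^2) (nu W) := fun i j =>
    (g2 i j).pow.integrable hWc hd (by norm_num)
  rw [Finset.sum_congr rfl fun i _ => integral_finsetSum _ fun j _ => id i j]
  rw [Finset.sum_comm]
  refine Finset.sum_congr rfl fun j _ => ?_
  rw [integral_finsetSum _ fun i _ => i22 i j]
  refine Finset.sum_congr rfl fun i _ => ?_
  rw [integral_sub (ib i j) (ic i j)]
  have hpt : ∀ x, pd j (fun x => pd i f x * pd i (pd j f) x) x =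
      (pd i (pd j f) x)^2 + pd i f x * pd i (pd j (pd j f)) x := by
    intro x
    rw [pd_mul j (d1 i x) (d2 i j x), pd_symm hfs j i, pd_symm (pd_smooth hfs j) j i]
    ring
  have := ibp hW j (G := fun x => pd i f x * pd i (pd j f) x) ((d1 i).mul (d2 i j))
    (((g1 i).mul (g2 i j)).integrable hWc hd (by norm_num)) ?_ (ib i j)
  · rw [← this]
    simp only [hpt]
    rw [integral_add (i22 i j) (ic i j)]; ring
  · rw [funext hpt]
    exact (i22 i j).add (ic i j)

theorem poly_ineq (hW : ContDiff ℝ (⊤:ℕ∞) W) (hd : Decay W) {ρ : ℝ} (hρ : 0 < ρ)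
    (hconv : ConvexOn ℝ Set.univ (fun x : EE n => ρ / 2 * ‖x‖ ^ 2 - W x)) (j : ℕ) :
    ∀ {f : EE n → ℝ}, f ∈ PP n (j+1) →
    ∫ x, ∑ i, (pd i f x)^2 ∂(nu W) ≤ ρ * j * ∫ x, (f x)^2 ∂(nu W) := by
  have hWc := hW.continuous
  induction j with
  | zero =>
    intro f hf
    have h0 : ∀ k, pd k f = 0 := fun k => PP_zero (PP_pd k hf)
    simp [h0]
  | succ j ih =>
    intro f hf
    have B := bochner hW hd hconv hf
    have i1 : ∀ k, Integrable (fun x => (pd k f x)^2) (nu W) := fun k =>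
      (PP_GR (PP_pd k hf)).pow.integrable hWc hd (by norm_num)
    have h1 : ∑ k, ∫ x, ∑ i, (pd i (pd k f) x)^2 ∂(nu W) ≤ ρ * j * ∫ x, ∑ i, (pd i f x)^2 ∂(nu W) := by
      rw [integral_finsetSum _ fun i _ => i1 i, Finset.mul_sum]
      exact Finset.sum_le_sum fun k _ => ih (PP_pd k hf)
    have G := green hW hd hf hf
    set A := ∫ x, ∑ i, (pd i f x)^2 ∂(nu W) with hA
    set S := ∫ x, (f x)^2 ∂(nu W) with hS
    set U := ∫ x, (Lop W f x)^2 ∂(nu W) with hU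
    have GA : A = ∫ x, f x * Lop W f x ∂(nu W) := by
      rw [← G, hA]; simp only [pow_two]
    have hA0 : 0 ≤ A := integral_nonneg fun x => Finset.sum_nonneg fun i _ => sq_nonneg _
    have hS0 : 0 ≤ S := integral_nonneg fun x => sq_nonneg _
    have iF : Integrable (fun x => f x ^2) (nu W) := (PP_GR hf).pow.integrable hWc hd (by norm_num)
    have iU : Integrable (fun x => Lop W f x ^2) (nu W) := (Lop_GR hW hf).pow.integrable hWc hd (by norm_num)
    have iFU : Integrable (fun x => f x * Lop W f x) (nu W) :=
      ((PP_GR hf).mul (Lop_GR hW hf)).integrable hWc hd (by norm_num)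
    have hUA : U ≤ ρ * (j+1) * A := by linarith
    -- Cauchy-Schwarz
    have CS : ∀ t : ℝ, 0 ≤ t^2 * S - 2 * t * A + U := by
      intro t
      have : t^2 * S - 2 * t * A + U = ∫ x, (t * f x - Lop W f x)^2 ∂(nu W) := by
        have iX : Integrable (fun x => t^2 * f x ^ 2 - 2 * t * (f x * Lop W f x)) (nu W) :=
          (iF.const_mul _).sub (iFU.const_mul _)
        rw [GA, hS, hU, ← integral_const_mul, ← integral_const_mul, ← integral_sub (iF.const_mul _) (iFU.const_mul _),
          ← integral_add iX iU]
        refine integral_congr_ae (Eventually.of_forall fun x => ?_)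
        simp only; ring
      rw [this]
      exact integral_nonneg fun x => sq_nonneg _
    push_cast
    have h1 := CS (ρ * (j+1))
    have hc : 0 < ρ * (j+1) := by positivity
    have h2 : 0 ≤ (ρ*(j+1)) * ((ρ * (j+1)) * S - A) := by nlinarith
    have h3 := nonneg_of_mul_nonneg_right h2 hc
    linarith

end


section
variable {n : ℕ}

theorem localLip_eq (hn : 1 ≤ n) {f : EE n → ℝ} {x : EE n} (hf : DifferentiableAt ℝ f x) :
    localLip f x = ‖fderiv ℝ f x‖ := by
  have : Nonempty (Fin n) := ⟨⟨0, hn⟩⟩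
  have : Nontrivial (EE n) := inferInstance
  rw [localLip, Filter.limsup_eq]
  have hb : ∀ a ∈ {a : ℝ | ∀ᶠ y in 𝓝[≠] x, |f y - f x| / dist y x ≤ a}, ‖fderiv ℝ f x‖ ≤ a := by
    intro a ha'
    have ha : ∀ᶠ y in 𝓝[≠] x, |f y - f x| / dist y x ≤ a := ha'
    have ha0 : 0 ≤ a := by
      obtain ⟨y, hy⟩ := ha.exists
      exact le_trans (by positivity) hy
    refine ContinuousLinearMap.opNorm_le_bound _ ha0 fun v => ?_
    by_cases hv : v = 0
    · simp [hv]
    have hl : HasDerivAt (fun t : ℝ => x + t • v) v 0 := by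
      simpa using ((hasDerivAt_id (0:ℝ)).smul_const v).const_add x
    have h1 : HasDerivAt (fun t : ℝ => f (x + t • v)) (fderiv ℝ f x v) 0 := by
      have : HasFDerivAt f (fderiv ℝ f x) (x + (0:ℝ) • v) := by simpa using hf.hasFDerivAt
      exact this.comp_hasDerivAt (0:ℝ) hl
    have h2 := h1.tendsto_slope_zero
    have h3 : Tendsto (fun t : ℝ => x + t • v) (𝓝[≠] 0) (𝓝[≠] x) := by
      refine tendsto_nhdsWithin_iff.2 ⟨?_, ?_⟩
      · have := hl.continuousAt.tendsto
        simp only [zero_smul, add_zero] at this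
        exact this.mono_left nhdsWithin_le_nhds
      · filter_upwards [self_mem_nhdsWithin] with t ht
        simpa [hv] using ht
    have h4 := h3.eventually ha
    refine le_of_tendsto h2.norm ?_
    filter_upwards [h4, self_mem_nhdsWithin] with t ht ht0
    have htv : 0 < ‖t‖ := by simpa using ht0
    have hvv : 0 < ‖v‖ := by simpa using hv
    rw [dist_eq_norm, add_sub_cancel_left, norm_smul, div_le_iff₀ (by positivity)] at ht
    simp only [zero_add, zero_smul, add_zero, norm_smul, norm_inv]
    rw [inv_mul_le_iff₀ htv, Real.norm_eq_abs]
    linarith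
  refine le_antisymm ?_ (le_csInf ?_ hb)
  · refine le_of_forall_pos_le_add fun ε hε => csInf_le ⟨_, hb⟩ ?_
    have := hf.hasFDerivAt.isLittleO.bound hε
    filter_upwards [nhdsWithin_le_nhds this, self_mem_nhdsWithin] with y hy hyx
    have hd : 0 < dist y x := dist_pos.2 hyx
    rw [div_le_iff₀ hd, dist_eq_norm]
    have h5 := (fderiv ℝ f x).le_opNorm (y - x)
    have h6 : |f y - f x| ≤ ‖f y - f x - fderiv ℝ f x (y - x)‖ + ‖fderiv ℝ f x (y - x)‖ := by
      have := norm_add_le (f y - f x - fderiv ℝ f x (y - x)) (fderiv ℝ f x (y - x))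
      simpa using this
    linarith
  · refine ⟨‖fderiv ℝ f x‖ + 1, ?_⟩
    have := hf.hasFDerivAt.isLittleO.bound (zero_lt_one)
    filter_upwards [nhdsWithin_le_nhds this, self_mem_nhdsWithin] with y hy hyx
    have hd : 0 < dist y x := dist_pos.2 hyx
    rw [div_le_iff₀ hd, dist_eq_norm]
    have h5 := (fderiv ℝ f x).le_opNorm (y - x)
    have h6 : |f y - f x| ≤ ‖f y - f x - fderiv ℝ f x (y - x)‖ + ‖fderiv ℝ f x (y - x)‖ := by
      have := norm_add_le (f y - f x - fderiv ℝ f x (y - x)) (fderiv ℝ f x (y - x))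
      simpa using this
    linarith

theorem norm_clm_sq (T : EE n →L[ℝ] ℝ) : ‖T‖^2 = ∑ i, (T (ebas i))^2 := by
  let w := (InnerProductSpace.toDual ℝ (EE n)).symm T
  have h1 : ‖w‖ = ‖T‖ := by simp [w]
  have h2 : ∀ v, T v = inner ℝ w v := fun v => by simp [w]
  rw [← h1, normsq_sum]
  refine Finset.sum_congr rfl fun i _ => ?_
  rw [h2, ebas, EuclideanSpace.inner_single_right]; simp

theorem norm_fderiv_sq (f : EE n → ℝ) (x : EE n) : ‖fderiv ℝ f x‖^2 = ∑ i, (pd i f x)^2 := norm_clm_sq _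

noncomputable def ss (x : EE n) : ℝ := √(1 + ‖x‖^2)

theorem ss_sq (x : EE n) : ss x ^2 = 1 + ‖x‖^2 := Real.sq_sqrt (by positivity)
theorem ss_ge_one (x : EE n) : 1 ≤ ss x := Real.one_le_sqrt.2 (by nlinarith [sq_nonneg ‖x‖])
theorem ss_ge_norm (x : EE n) : ‖x‖ ≤ ss x := Real.le_sqrt_of_sq_le (by linarith)

theorem ss_smooth : ContDiff ℝ (⊤:ℕ∞) (ss (n := n)) :=
  (contDiff_const.add (contDiff_norm_sq ℝ)).sqrt fun x => by positivity

theorem ss_fderiv (x : EE n) : ‖fderiv ℝ ss x‖ ≤ 1 := by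
  have h1 : HasFDerivAt (fun x : EE n => 1 + ‖x‖^2) (2 • (innerSL ℝ x)) x :=
    ((hasStrictFDerivAt_norm_sq x).hasFDerivAt).const_add 1
  have h2 := (h1.sqrt (by positivity)).fderiv
  have h3 : fderiv ℝ ss x = (1 / (2 * √(1 + ‖x‖^2))) • (2 • (innerSL ℝ x)) := h2
  rw [h3]
  refine ContinuousLinearMap.opNorm_le_bound _ zero_le_one fun v => ?_
  have hs : 0 < √(1 + ‖x‖^2) := lt_of_lt_of_le one_pos (ss_ge_one x)
  have h4 : ((1 / (2 * √(1 + ‖x‖^2))) • (2 • (innerSL ℝ x))) v = inner ℝ x v / √(1 + ‖x‖^2) := by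
    simp; field_simp
  rw [h4, norm_div, Real.norm_of_nonneg hs.le, div_le_iff₀ hs]
  have := norm_inner_le_norm (𝕜 := ℝ) x v
  have h5 : ‖x‖ ≤ √(1 + ‖x‖^2) := ss_ge_norm x
  nlinarith [norm_nonneg v]

theorem ss_convex : ConvexOn ℝ Set.univ (ss (n := n)) := by
  refine ⟨convex_univ, fun x _ y _ a b ha hb hab => ?_⟩
  have hx := ss_ge_one x
  have hy := ss_ge_one y
  have h1 : 1 + inner ℝ x y ≤ ss x * ss y := by
    have c := real_inner_le_norm x y
    have : 1 + ‖x‖ * ‖y‖ ≤ ss x * ss y := by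
      refine le_of_sq_le_sq ?_ (by positivity)
      rw [mul_pow, ss_sq, ss_sq]; nlinarith [sq_nonneg (‖x‖ - ‖y‖)]
    linarith
  simp only [smul_eq_mul]
  refine (Real.sqrt_le_left (by positivity)).2 ?_
  have h2 : ‖a • x + b • y‖^2 = a^2 * ‖x‖^2 + 2 * (a*b) * inner ℝ x y + b^2 * ‖y‖^2 := by
    rw [norm_add_sq_real, norm_smul, norm_smul, inner_smul_left, inner_smul_right, Real.norm_of_nonneg ha, Real.norm_of_nonneg hb]
    simp; ring
  have h3 : (a * ss x + b * ss y)^2 = a^2 * (1 + ‖x‖^2) + 2 * (a * b) * (ss x * ss y) + b^2 * (1 + ‖y‖^2) := by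
    rw [← ss_sq, ← ss_sq]; ring
  rw [h2, h3]
  have h4 := mul_le_mul_of_nonneg_left h1 (mul_nonneg ha hb)
  have h5 : (a+b)^2 = 1 := by rw [hab]; norm_num
  nlinarith

theorem pert_convex {V : EE n → ℝ} {ρ ε : ℝ} (hε : 0 < ε)
    (hconv : ConvexOn ℝ Set.univ (fun x : EE n => ρ / 2 * ‖x‖ ^ 2 - V x)) :
    ConvexOn ℝ Set.univ (fun x : EE n => (ρ + 2 * ε) / 2 * ‖x‖ ^ 2 - (V x + 2 * ε * ss x)) := by
  have h1 : ConvexOn ℝ Set.univ (fun x : EE n => (ss x - 1)^2) := by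
    have : ConvexOn ℝ Set.univ (fun x : EE n => ss x + (-1)) := ss_convex.add_const (-1)
    exact (this.pow (fun x _ => by have := ss_ge_one x; linarith) 2)
  have h2 := (hconv.add (h1.smul hε.le)).add_const (-2*ε)
  refine h2.congr fun x _ => ?_
  have := ss_sq x
  simp
  linear_combination ε * this

theorem grad_ineq {V : EE n → ℝ} (hV : ContDiff ℝ (⊤:ℕ∞) V) {ρ : ℝ}
    (hconv : ConvexOn ℝ Set.univ (fun x : EE n => ρ / 2 * ‖x‖ ^ 2 - V x)) (x v : EE n) :
    V (x + v) ≤ V x + fderiv ℝ V x v + ρ / 2 * ‖v‖^2 := by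
  have hc := line_conv hconv x v
  have hd := line_deriv_conv hV ρ x v 0
  have := hc.le_slope_of_hasDerivAt (x := 0) (y := 1) (Set.mem_univ _) (Set.mem_univ _) one_pos hd
  simp [slope_def_field] at this
  rw [norm_add_sq_real] at this
  linarith

theorem V_decay {V : EE n → ℝ} (hV : ContDiff ℝ (⊤:ℕ∞) V) {ρ : ℝ} (hρ : 0 < ρ)
    (hconv : ConvexOn ℝ Set.univ (fun x : EE n => ρ / 2 * ‖x‖ ^ 2 - V x))
    (hI : Integrable (fun x => Real.exp (-(V x)))) :
    ∃ C, ∀ x, Real.exp (‖fderiv ℝ V x‖ / 4) * Real.exp (-(V x)) ≤ C := by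
  let c := (volume (Metric.closedBall (0 : EE n) (1/4))).toReal
  have hc : 0 < c := by
    refine ENNReal.toReal_pos ?_ ?_
    · exact (Metric.measure_closedBall_pos _ _ (by norm_num)).ne'
    · exact measure_closedBall_lt_top.ne
  refine ⟨Real.exp (ρ/2) * ((∫ x, Real.exp (-(V x))) / c), fun x => ?_⟩
  set T := fderiv ℝ V x with hT
  let w := (InnerProductSpace.toDual ℝ (EE n)).symm T
  have hw1 : ‖w‖ = ‖T‖ := by simp [w]
  have hw2 : ∀ v, T v = inner ℝ w v := fun v => by simp [w]
  let v := ‖w‖⁻¹ • w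
  have hv1 : ‖v‖ ≤ 1 := by
    simp only [v, norm_smul, norm_inv, norm_norm]
    exact inv_mul_le_one
  have hv2 : T v = ‖T‖ := by
    rw [hw2, ← hw1]; simp only [v, inner_smul_right, real_inner_self_eq_norm_sq]
    by_cases h : ‖w‖ = 0
    · simp [h]
    · field_simp
  let y0 := x - (1/2:ℝ) • v
  have key : ∀ y ∈ Metric.closedBall y0 (1/4),
      Real.exp (-(V x) + ‖T‖/4 - ρ/2) ≤ Real.exp (-(V y)) := by
    intro y hy
    rw [Real.exp_le_exp]
    rw [mem_closedBall_iff_norm] at hy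
    have h1 := grad_ineq hV hconv x (y - x)
    rw [add_sub_cancel] at h1
    have e : y - x = (y - y0) + (-(1/2:ℝ)) • v := by simp only [y0]; module
    have h2 : T (y - x) ≤ - ‖T‖/4 := by
      rw [e, map_add, map_smul, hv2]
      have := (le_abs_self _).trans (T.le_opNorm (y - y0))
      simp only [smul_eq_mul]
      nlinarith [norm_nonneg T]
    have h3 : ‖y - x‖ ≤ 1 := by
      rw [e]; refine (norm_add_le _ _).trans ?_
      rw [norm_smul]; norm_num
      linarith
    have h4 : ‖y - x‖^2 ≤ 1 := by nlinarith [norm_nonneg (y-x)]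
    nlinarith
  have hvol : (volume (Metric.closedBall y0 (1/4))).toReal = c := by
    simp only [c]; rw [Measure.addHaar_closedBall_center]
  have h1 : Real.exp (-(V x) + ‖T‖/4 - ρ/2) * c ≤ ∫ x, Real.exp (-(V x)) := by
    have h2 : ∫ y in Metric.closedBall y0 (1/4), Real.exp (-(V x) + ‖T‖/4 - ρ/2) ≤
        ∫ y in Metric.closedBall y0 (1/4), Real.exp (-(V y)) :=
      setIntegral_mono_on (integrableOn_const measure_closedBall_lt_top.ne) hI.integrableOn
        Metric.isClosed_closedBall.measurableSet key
    rw [setIntegral_const, Measure.real, hvol, smul_eq_mul] at h2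
    have h3 := setIntegral_le_integral (s := Metric.closedBall y0 (1/4)) hI
      (Eventually.of_forall fun x => (Real.exp_pos _).le)
    linarith
  have h2 : Real.exp (‖T‖/4) * Real.exp (-(V x)) = Real.exp (ρ/2) * Real.exp (-(V x) + ‖T‖/4 - ρ/2) := by
    rw [← Real.exp_add, ← Real.exp_add]; ring_nf
  rw [h2]
  refine mul_le_mul_of_nonneg_left ?_ (Real.exp_pos _).le
  rwa [le_div_iff₀ hc]

theorem pert_decay {V : EE n → ℝ} (hV : ContDiff ℝ (⊤:ℕ∞) V) {ρ ε : ℝ} (hρ : 0 < ρ) (hε : 0 < ε)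
    (hconv : ConvexOn ℝ Set.univ (fun x : EE n => ρ / 2 * ‖x‖ ^ 2 - V x))
    (hI : Integrable (fun x => Real.exp (-(V x)))) :
    Decay (fun x => V x + 2 * ε * ss x) := by
  obtain ⟨C, hC⟩ := V_decay hV hρ hconv hI
  intro N
  refine ⟨(ε⁻¹^N * N.factorial) * ((8 + 2 * ε)^2 * C), fun x => ?_⟩
  set a := ‖fderiv ℝ V x‖ with ha
  have ha0 : 0 ≤ a := norm_nonneg _
  have h1 : ‖fderiv ℝ (fun x => V x + 2 * ε * ss x) x‖ ≤ a + 2 * ε := by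
    have := ((smooth_diff hV x).hasFDerivAt.add ((smooth_diff ss_smooth x).hasFDerivAt.const_mul (2*ε))).fderiv
    have e : fderiv ℝ (fun x => V x + 2 * ε * ss x) x = fderiv ℝ V x + (2 * ε) • fderiv ℝ ss x := this
    rw [e]
    refine (norm_add_le _ _).trans (add_le_add le_rfl ?_)
    rw [norm_smul, Real.norm_of_nonneg (by positivity)]
    exact mul_le_of_le_one_right (by positivity) (ss_fderiv x)
  have h2 : 1 + ‖fderiv ℝ (fun x => V x + 2 * ε * ss x) x‖ ≤ (8 + 2 * ε) * Real.exp (a/8) := by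
    have := Real.add_one_le_exp (a/8)
    nlinarith
  have h3 : (1 + ‖fderiv ℝ (fun x => V x + 2 * ε * ss x) x‖)^2 ≤ (8 + 2 * ε)^2 * Real.exp (a/4) := by
    have e : Real.exp (a/4) = Real.exp (a/8) ^2 := by rw [← Real.exp_nat_mul]; push_cast; ring_nf
    rw [e, ← mul_pow]
    exact pow_le_pow_left₀ (by positivity) h2 2
  have h4 : (1 + ‖x‖)^N * Real.exp (-(2 * ε * ss x)) ≤ ε⁻¹^N * N.factorial := by
    have hs1 := ss_ge_one x
    have hs2 := ss_ge_norm x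
    have h5 : (1 + ‖x‖)^N ≤ ε⁻¹^N * (2*ε*ss x)^N := by
      rw [← mul_pow]
      refine pow_le_pow_left₀ (by positivity) ?_ N
      field_simp; linarith
    have h6 := Real.pow_div_factorial_le_exp (2*ε*ss x) (by positivity) N
    rw [div_le_iff₀ (by positivity)] at h6
    rw [Real.exp_neg, ← div_eq_mul_inv, div_le_iff₀ (Real.exp_pos _)]
    refine h5.trans ?_
    have hp : 0 ≤ ε⁻¹^N := by positivity
    have := mul_le_mul_of_nonneg_left h6 hp
    linarith
  have h7 : Real.exp (-(V x + 2 * ε * ss x)) = Real.exp (-(V x)) * Real.exp (-(2*ε*ss x)) := by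
    rw [← Real.exp_add]; ring_nf
  rw [h7]
  calc _ = ((1 + ‖x‖)^N * Real.exp (-(2 * ε * ss x))) * ((1 + ‖fderiv ℝ (fun x => V x + 2 * ε * ss x) x‖)^2 * Real.exp (-(V x))) := by ring
    _ ≤ (ε⁻¹^N * N.factorial) * ((8 + 2 * ε)^2 * C) := by
      have hp : 0 ≤ ε⁻¹^N * (N.factorial:ℝ) := by positivity
      refine mul_le_mul h4 ?_ (by positivity) hp
      calc _ ≤ ((8 + 2 * ε)^2 * Real.exp (a/4)) * Real.exp (-(V x)) := mul_le_mul_of_nonneg_right h3 (Real.exp_pos _).le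
        _ = (8 + 2 * ε)^2 * (Real.exp (a/4) * Real.exp (-(V x))) := by ring
        _ ≤ _ := mul_le_mul_of_nonneg_left (hC x) (by positivity)

end


section
variable {n : ℕ}

noncomputable def mulE (n : ℕ) (ε : ℝ) : (EE n → ℝ) →ₗ[ℝ] (EE n → ℝ) where
  toFun f := fun x => f x * Real.exp (-(ε * ss x))
  map_add' f g := by ext x; simp [add_mul]
  map_smul' c f := by ext x; simp; ring

def lamSet {Ω : Type*} [PseudoMetricSpace Ω] [MeasurableSpace Ω]
    (μ : Measure Ω) (k : ℕ) : Set ℝ := { a : ℝ | ∃ F : Submodule ℝ (Ω → ℝ), Module.finrank ℝ F = k ∧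
    (∀ f ∈ F, memW12Lip μ f) ∧
    a = sSup { r : ℝ | ∃ f ∈ F, (∫ x, (f x) ^ 2 ∂μ) ≠ 0 ∧
      r = (∫ x, (localLip f x) ^ 2 ∂μ) / (∫ x, (f x) ^ 2 ∂μ) } }

theorem lambdaLip_eq {Ω : Type*} [PseudoMetricSpace Ω] [MeasurableSpace Ω]
    (μ : Measure Ω) (k : ℕ) : lambdaLip μ k = sInf (lamSet μ k) := rfl

theorem lamSet_nonneg {Ω : Type*} [PseudoMetricSpace Ω] [MeasurableSpace Ω]
    (μ : Measure Ω) (k : ℕ) : ∀ a ∈ lamSet μ k, 0 ≤ a := by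
  rintro a ⟨F, -, -, rfl⟩
  refine Real.sSup_nonneg ?_
  rintro r ⟨f, -, -, rfl⟩
  exact div_nonneg (integral_nonneg fun x => sq_nonneg _) (integral_nonneg fun x => sq_nonneg _)

theorem test_fun (hn : 1 ≤ n) {V : EE n → ℝ} (hV : ContDiff ℝ (⊤:ℕ∞) V) {ρ ε : ℝ} (hρ : 0 < ρ) (hε : 0 < ε)
    (hconv : ConvexOn ℝ Set.univ (fun x : EE n => ρ / 2 * ‖x‖ ^ 2 - V x))
    (hI : Integrable (fun x => Real.exp (-(V x)))) {m : ℕ} {f : EE n → ℝ} (hf : f ∈ PP n (m+1)) :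
    memW12Lip (nu V) (mulE n ε f) ∧ ∫ x, (localLip (mulE n ε f) x)^2 ∂(nu V) ≤
      ((1+ε)*((ρ+2*ε)*m) + (ε^2 + ε)) * ∫ x, (mulE n ε f x)^2 ∂(nu V) := by
  set W : EE n → ℝ := fun x => V x + 2 * ε * ss x with hWdef
  have hW : ContDiff ℝ (⊤:ℕ∞) W := hV.add (contDiff_const.mul ss_smooth)
  have hWc := hW.continuous
  have hVc := hV.continuous
  have hd : Decay W := pert_decay hV hρ hε hconv hI
  have hcv := pert_convex hε hconv
  have main := poly_ineq hW hd (ρ := ρ + 2*ε) (by positivity) hcv m hf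
  set g := mulE n ε f with hg
  have hgs : ContDiff ℝ (⊤:ℕ∞) g :=
    (PP_smooth hf).mul (Real.contDiff_exp.comp (contDiff_const.mul ss_smooth).neg)
  have hexp : ∀ x, Real.exp (-(W x)) = Real.exp (-(ε * ss x))^2 * Real.exp (-(V x)) := by
    intro x
    rw [← Real.exp_nat_mul, ← Real.exp_add]; simp only [hWdef]; push_cast; ring_nf
  have iF : Integrable (fun x => f x ^2) (nu W) := (PP_GR hf).pow.integrable hWc hd (by norm_num)
  have iD : Integrable (fun x => ∑ i, pd i f x ^2) (nu W) := integrable_finsetSum _ fun i _ =>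
    (PP_GR (PP_pd i (PP_mono_succ _ hf))).pow.integrable hWc hd (by norm_num)
  have trans_int : ∀ h : EE n → ℝ, Integrable h (nu W) → Integrable (fun x => h x * Real.exp (-(ε * ss x))^2) (nu V) := by
    intro h hh
    rw [integrable_nu hWc] at hh
    rw [integrable_nu hVc]
    refine hh.congr (Eventually.of_forall fun x => ?_)
    simp only [hexp]; ring
  have trans_eq : ∀ h : EE n → ℝ, ∫ x, h x * Real.exp (-(ε * ss x))^2 ∂(nu V) = ∫ x, h x ∂(nu W) := by
    intro h
    rw [integral_nu hWc, integral_nu hVc]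
    refine integral_congr_ae (Eventually.of_forall fun x => ?_)
    simp only [hexp]; ring
  have hg2 : ∀ x, g x ^2 = f x ^2 * Real.exp (-(ε * ss x))^2 := by
    intro x; simp only [hg, mulE, LinearMap.coe_mk, AddHom.coe_mk]; ring
  have hloc : ∀ x, localLip g x ^ 2 = ‖fderiv ℝ g x‖^2 := fun x => by
    rw [localLip_eq hn (smooth_diff hgs x)]
  have hDg : ∀ x, ‖fderiv ℝ g x‖ ≤ Real.exp (-(ε * ss x)) * (‖fderiv ℝ f x‖ + ε * |f x|) := by
    intro x
    have h1 : HasFDerivAt (fun x : EE n => Real.exp (-(ε * ss x))) (Real.exp (-(ε * ss x)) • -(ε • fderiv ℝ ss x)) x :=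
      (((smooth_diff ss_smooth x).hasFDerivAt.const_mul ε).neg).exp
    have h2 := ((PP_diff hf x).hasFDerivAt.mul h1).fderiv
    have h3 : fderiv ℝ g x = f x • (Real.exp (-(ε * ss x)) • -(ε • fderiv ℝ ss x)) + Real.exp (-(ε * ss x)) • fderiv ℝ f x := h2
    rw [h3]
    refine (norm_add_le _ _).trans ?_
    rw [norm_smul, norm_smul, norm_neg, norm_smul, norm_smul, Real.norm_of_nonneg (Real.exp_pos _).le,
      Real.norm_of_nonneg hε.le, Real.norm_eq_abs]
    have := mul_le_mul_of_nonneg_left (ss_fderiv x) (show 0 ≤ |f x| * Real.exp (-(ε * ss x)) * ε by positivity)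
    linarith
  have hDg2 : ∀ x, ‖fderiv ℝ g x‖^2 ≤ ((1+ε) * (∑ i, pd i f x ^2) + (ε^2+ε) * f x ^2) * Real.exp (-(ε * ss x))^2 := by
    intro x
    have h1 := pow_le_pow_left₀ (norm_nonneg _) (hDg x) 2
    rw [← norm_fderiv_sq]
    refine h1.trans ?_
    rw [mul_pow, mul_comm]
    refine mul_le_mul_of_nonneg_right ?_ (by positivity)
    have h2 : |f x|^2 = f x ^2 := sq_abs _
    have h3 : 2 * ‖fderiv ℝ f x‖ * |f x| ≤ ‖fderiv ℝ f x‖^2 + |f x|^2 := two_mul_le_add_sq _ _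
    rw [← h2]
    nlinarith
  have iB : Integrable (fun x => (1+ε) * (∑ i, pd i f x ^2) + (ε^2+ε) * f x ^2) (nu W) :=
    (iD.const_mul _).add (iF.const_mul _)
  have iG : Integrable (fun x => localLip g x ^ 2) (nu V) := by
    simp only [hloc]
    refine (trans_int _ iB).mono' ((hgs.continuous_fderiv (by simp)).norm.pow 2).aestronglyMeasurable
      (Eventually.of_forall fun x => ?_)
    rw [Real.norm_of_nonneg (sq_nonneg _)]
    exact hDg2 x
  have ig : Integrable (fun x => g x ^ 2) (nu V) := by
    simp only [hg2]; exact trans_int _ iF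
  refine ⟨⟨(hgs.of_le (by exact_mod_cast le_top)).locallyLipschitz, ?_⟩, ?_⟩
  · exact ENNReal.add_lt_top.2 ⟨ig.lintegral_lt_top, iG.lintegral_lt_top⟩
  · have h1 : ∫ x, g x ^2 ∂(nu V) = ∫ x, f x ^2 ∂(nu W) := by
      simp only [hg2]; exact trans_eq _
    rw [h1]
    have h2 : ∫ x, localLip g x ^ 2 ∂(nu V) ≤ ∫ x, ((1+ε) * (∑ i, pd i f x ^2) + (ε^2+ε) * f x ^2) ∂(nu W) := by
      rw [← trans_eq]
      refine integral_mono iG (trans_int _ iB) fun x => ?_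
      simp only [hloc]; exact hDg2 x
    refine h2.trans ?_
    rw [integral_add (iD.const_mul _) (iF.const_mul _), integral_const_mul, integral_const_mul]
    have := mul_le_mul_of_nonneg_left main (show 0 ≤ 1 + ε by positivity)
    linarith

theorem upper (hn : 1 ≤ n) {V : EE n → ℝ} (hV : ContDiff ℝ (⊤:ℕ∞) V) {ρ ε : ℝ} (hρ : 0 < ρ) (hε : 0 < ε)
    (hconv : ConvexOn ℝ Set.univ (fun x : EE n => ρ / 2 * ‖x‖ ^ 2 - V x))
    (hI : Integrable (fun x => Real.exp (-(V x)))) {m k : ℕ} (hk : k ≤ Module.finrank ℝ (PP n (m+1))) :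
    ∃ a ∈ lamSet (nu V) k, a ≤ (1+ε)*((ρ+2*ε)*m) + (ε^2 + ε) := by
  obtain ⟨b, hb⟩ := exists_linearIndependent_of_le_finrank hk
  have hinj : LinearMap.ker (mulE n ε) = ⊥ := by
    rw [LinearMap.ker_eq_bot']
    intro f hf
    ext x
    have := congrFun hf x
    simpa [mulE, (Real.exp_pos _).ne'] using this
  have hb2 : LinearIndependent ℝ (fun i => (b i : EE n → ℝ)) := hb.map' (PP n (m+1)).subtype (by simp)
  have hb3 := hb2.map' (mulE n ε) hinj
  have hF : ∀ g ∈ Submodule.span ℝ (Set.range (mulE n ε ∘ fun i => (b i : EE n → ℝ))), ∃ f ∈ PP n (m+1), g = mulE n ε f := by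
    intro g hg
    have : Submodule.span ℝ (Set.range (mulE n ε ∘ fun i => (b i : EE n → ℝ))) ≤ (PP n (m+1)).map (mulE n ε) := by
      rw [Submodule.span_le]
      rintro _ ⟨i, rfl⟩
      exact ⟨b i, (b i).2, rfl⟩
    obtain ⟨f, hf, rfl⟩ := this hg
    exact ⟨f, hf, rfl⟩
  refine ⟨_, ⟨Submodule.span ℝ (Set.range (mulE n ε ∘ fun i => (b i : EE n → ℝ))), ?_, ?_, rfl⟩, ?_⟩
  · rw [finrank_span_eq_card hb3]; simp
  · intro g hg
    obtain ⟨f, hf, rfl⟩ := hF g hg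
    exact (test_fun hn hV hρ hε hconv hI hf).1
  · refine Real.sSup_le ?_ (by positivity)
    rintro r ⟨g, hg, h0, rfl⟩
    obtain ⟨f, hf, rfl⟩ := hF g hg
    have hpos : 0 < ∫ x, (mulE n ε f x)^2 ∂(nu V) := lt_of_le_of_ne (integral_nonneg fun x => sq_nonneg _) h0.symm
    rw [div_le_iff₀ hpos]
    exact (test_fun hn hV hρ hε hconv hI hf).2

theorem lambda_upper (hn : 1 ≤ n) {V : EE n → ℝ} (hV : ContDiff ℝ (⊤:ℕ∞) V) {ρ : ℝ} (hρ : 0 < ρ)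
    (hconv : ConvexOn ℝ Set.univ (fun x : EE n => ρ / 2 * ‖x‖ ^ 2 - V x))
    (hI : Integrable (fun x => Real.exp (-(V x)))) {m k : ℕ} (hk : k ≤ Module.finrank ℝ (PP n (m+1))) :
    lambdaLip (nu V) k ≤ ρ * m := by
  have h1 : ∀ᶠ ε in 𝓝[>] (0:ℝ), lambdaLip (nu V) k ≤ (1+ε)*((ρ+2*ε)*m) + (ε^2 + ε) := by
    filter_upwards [self_mem_nhdsWithin] with ε hε
    obtain ⟨a, ha, h⟩ := upper hn hV hρ hε hconv hI hk
    exact (csInf_le ⟨0, lamSet_nonneg _ _⟩ ha).trans h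
  have h2 : Tendsto (fun ε : ℝ => (1+ε)*((ρ+2*ε)*m) + (ε^2 + ε)) (𝓝[>] 0) (𝓝 (ρ * m)) := by
    have : Continuous (fun ε : ℝ => (1+ε)*((ρ+2*ε)*m) + (ε^2 + ε)) := by fun_prop
    have := this.tendsto 0
    simp at this
    exact this.mono_left nhdsWithin_le_nhds
  exact ge_of_tendsto h2 h1

end


section
variable {n : ℕ}

theorem lip_ext {f : EE n → ℝ} (hf : LocallyLipschitz f) (r : ℝ) :
    ∃ K, ∃ g : EE n → ℝ, LipschitzWith K g ∧ Set.EqOn f g (Metric.closedBall 0 r) := by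
  have h0 : LocallyLipschitzOn (Metric.closedBall (0 : EE n) r) f := hf.locallyLipschitzOn
  obtain ⟨K, hK⟩ := h0.exists_lipschitzOnWith_of_compact (isCompact_closedBall (0 : EE n) r)
  obtain ⟨g, hg, he⟩ := hK.extend_real
  exact ⟨K, g, hg, he⟩

theorem eventually_eq_ext {f g : EE n → ℝ} {r : ℝ} (h : Set.EqOn f g (Metric.closedBall 0 r)) {x : EE n}
    (hx : ‖x‖ < r) : f =ᶠ[𝓝 x] g := by
  have : Metric.ball (0 : EE n) r ∈ 𝓝 x := Metric.isOpen_ball.mem_nhds (by simpa using hx)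
  filter_upwards [this] with y hy using h (Metric.ball_subset_closedBall hy)

theorem ae_diff {f : EE n → ℝ} (hf : LocallyLipschitz f) : ∀ᵐ x, DifferentiableAt ℝ f x := by
  have : ∀ N : ℕ, ∀ᵐ x : EE n, ‖x‖ < N → DifferentiableAt ℝ f x := by
    intro N
    obtain ⟨K, g, hg, he⟩ := lip_ext hf N
    filter_upwards [hg.ae_differentiableAt] with x hx hxN
    exact (eventually_eq_ext he hxN).differentiableAt_iff.2 hx
  rw [← ae_all_iff] at this
  filter_upwards [this] with x hx
  obtain ⟨N, hN⟩ := exists_nat_gt ‖x‖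
  exact hx N hN

theorem ae_nu {W : EE n → ℝ} {p : EE n → Prop} (h : ∀ᵐ x, p x) : ∀ᵐ x ∂(nu W), p x :=
  (withDensity_absolutelyContinuous _ _).ae_le h

theorem ibp_lip_compact {f G : EE n → ℝ} (hf : LocallyLipschitz f) (hG : ContDiff ℝ (⊤:ℕ∞) G)
    (hc : HasCompactSupport G) (i : Fin n) : ∫ x, pd i f x * G x = - ∫ x, f x * pd i G x := by
  obtain ⟨r, hr⟩ := hc.isCompact.isBounded.subset_ball (0 : EE n)
  obtain ⟨K, g, hg, he⟩ := lip_ext hf r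
  obtain ⟨D, hD⟩ := hG.lipschitzWith_of_hasCompactSupport hc (by simp)
  have h1 := hg.integral_lineDeriv_mul_eq (μ := volume) hD hc (ebas i)
  have e1 : ∫ x, pd i f x * G x = ∫ x, lineDeriv ℝ g x (ebas i) * G x := by
    refine integral_congr_ae ?_
    filter_upwards [hg.ae_differentiableAt] with x hx
    by_cases hxs : x ∈ tsupport G
    · have hxr : ‖x‖ < r := by simpa using hr hxs
      have := eventually_eq_ext he hxr
      rw [hx.lineDeriv_eq_fderiv, pd, this.fderiv_eq]
    · rw [image_eq_zero_of_notMem_tsupport hxs]; simp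
  have e2 : ∫ x, lineDeriv ℝ G x (-(ebas i)) * g x = - ∫ x, f x * pd i G x := by
    rw [← integral_neg]
    refine integral_congr_ae (Eventually.of_forall fun x => ?_)
    simp only
    rw [(smooth_diff hG x).lineDeriv_eq_fderiv, map_neg]
    by_cases hxs : x ∈ tsupport G
    · have hxr : ‖x‖ < r := by simpa using hr hxs
      rw [(eventually_eq_ext he hxr).eq_of_nhds, pd]; ring
    · have : fderiv ℝ G x = 0 := by
        have := image_eq_zero_of_notMem_tsupport (f := fderiv ℝ G) (x := x) (fun h => hxs (tsupport_fderiv_subset ℝ h))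
        exact this
      rw [pd, this]; simp
  rw [e1, h1, e2]

theorem meas_pd (f : EE n → ℝ) (i : Fin n) : Measurable (pd i f) :=
  measurable_fderiv_apply_const ℝ f (ebas i)

variable {W : EE n → ℝ}

theorem memLp_of_sq {μ : Measure (EE n)} {f : EE n → ℝ} (hm : AEStronglyMeasurable f μ) (h : Integrable (fun x => f x ^ 2) μ) :
    MemLp f 2 μ := (memLp_two_iff_integrable_sq hm).2 h

theorem GR.memLp (hW : Continuous W) (hd : Decay W) {a : ℕ} (ha : a ≤ 1) {F : EE n → ℝ} (hF : GR W a F) :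
    MemLp F 2 (nu W) :=
  memLp_of_sq hF.1.aestronglyMeasurable (hF.pow.integrable hW hd (by omega))

theorem pd_memLp {f : EE n → ℝ} {μ : Measure (EE n)} (hD : Integrable (fun x => ‖fderiv ℝ f x‖^2) μ) (i : Fin n) :
    MemLp (pd i f) 2 μ := by
  refine memLp_of_sq (meas_pd f i).aestronglyMeasurable ?_
  refine hD.mono' ((meas_pd f i).pow_const 2).aestronglyMeasurable (Eventually.of_forall fun x => ?_)
  rw [Real.norm_of_nonneg (sq_nonneg _), norm_fderiv_sq]
  exact Finset.single_le_sum (f := fun i => pd i f x ^2) (fun i _ => sq_nonneg _) (Finset.mem_univ i)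

theorem ibp_lip (hW : ContDiff ℝ (⊤:ℕ∞) W) (hd : Decay W) {f : EE n → ℝ} (hf : LocallyLipschitz f)
    (hf2 : Integrable (fun x => f x ^2) (nu W)) (hD : Integrable (fun x => ‖fderiv ℝ f x‖^2) (nu W))
    {j : ℕ} {q : EE n → ℝ} (hq : q ∈ PP n (j+1)) (i : Fin n) :
    ∫ x, pd i f x * q x ∂(nu W) = ∫ x, f x * (q x * pd i W x - pd i q x) ∂(nu W) := by
  have hWc := hW.continuous
  obtain ⟨χ, C, hχs, hχc, hχ0, hχ1, hχt, hχd, hχdt⟩ := exists_cutoff n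
  have hqs := PP_smooth hq
  have mf : MemLp f 2 (nu W) := memLp_of_sq hf.continuous.aestronglyMeasurable hf2
  have mp : MemLp (pd i f) 2 (nu W) := pd_memLp hD i
  have mq : MemLp q 2 (nu W) := (PP_GR hq).memLp hWc hd (by norm_num)
  have mdq : MemLp (pd i q) 2 (nu W) := (PP_GR (PP_pd i hq)).memLp hWc hd (by norm_num)
  have mqW : MemLp (fun x => q x * pd i W x) 2 (nu W) := ((PP_GR hq).mul (GR.pdW hW i)).memLp hWc hd (by norm_num)
  have I1 : Integrable (fun x => pd i f x * q x) (nu W) := mp.integrable_mul mq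
  have I2 : Integrable (fun x => f x * q x) (nu W) := mf.integrable_mul mq
  have I3 : Integrable (fun x => f x * pd i q x) (nu W) := mf.integrable_mul mdq
  have I4 : Integrable (fun x => f x * (q x * pd i W x)) (nu W) := mf.integrable_mul mqW
  have step : ∀ R, ∫ x, χ R x * (pd i f x * q x) ∂(nu W) =
      ∫ x, f x * (χ R x * (q x * pd i W x) - χ R x * pd i q x - pd i (χ R) x * q x) ∂(nu W) := by
    intro R
    have hE : ContDiff ℝ (⊤:ℕ∞) (fun x => Real.exp (-(W x))) := Real.contDiff_exp.comp hW.neg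
    have hA : ContDiff ℝ (⊤:ℕ∞) (fun x => χ R x * q x) := (hχs R).mul hqs
    have hG : ContDiff ℝ (⊤:ℕ∞) (fun x => (χ R x * q x) * Real.exp (-(W x))) := hA.mul hE
    have hGc : HasCompactSupport (fun x => (χ R x * q x) * Real.exp (-(W x))) := (hχc R).mul_right.mul_right
    have := ibp_lip_compact hf hG hGc i
    rw [integral_nu hWc, integral_nu hWc]
    have e1 : ∫ x, χ R x * (pd i f x * q x) * Real.exp (-(W x)) = ∫ x, pd i f x * (χ R x * q x * Real.exp (-(W x))) :=
      integral_congr_ae (Eventually.of_forall fun x => by simp only; ring)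
    rw [e1, this, ← integral_neg]
    refine integral_congr_ae (Eventually.of_forall fun x => ?_)
    simp only
    have e2 : pd i (fun x => Real.exp (-(W x))) x = - (pd i W x * Real.exp (-(W x))) := pd_exp (smooth_diff hW) i x
    rw [pd_mul i (smooth_diff hA x) (smooth_diff hE x), e2, pd_mul i (smooth_diff (hχs R) x) (smooth_diff hqs x)]
    ring
  have lim1 : Tendsto (fun R => ∫ x, χ R x * (pd i f x * q x) ∂(nu W)) atTop (𝓝 (∫ x, pd i f x * q x ∂(nu W))) := by
    refine tendsto_integral_of_dominated_convergence (fun x => |pd i f x * q x|) (fun R => ?_) I1.abs (fun R => ?_) ?_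
    · exact (hχs R).continuous.aestronglyMeasurable.mul I1.1
    · refine Eventually.of_forall fun x => ?_
      rw [Real.norm_eq_abs, abs_mul, abs_of_nonneg (hχ0 R x)]
      exact mul_le_of_le_one_left (abs_nonneg _) (hχ1 R x)
    · refine Eventually.of_forall fun x => ?_
      simpa using (hχt x).mul_const (pd i f x * q x)
  have lim2 : Tendsto (fun R => ∫ x, f x * (χ R x * (q x * pd i W x) - χ R x * pd i q x - pd i (χ R) x * q x) ∂(nu W)) atTop
      (𝓝 (∫ x, f x * (q x * pd i W x - pd i q x) ∂(nu W))) := by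
    refine tendsto_integral_of_dominated_convergence
      (fun x => |f x * (q x * pd i W x)| + |f x * pd i q x| + C * |f x * q x|) (fun R => ?_)
      ((I4.abs.add I3.abs).add (I2.abs.const_mul C)) (fun R => ?_) ?_
    · refine Continuous.aestronglyMeasurable (hf.continuous.mul ?_)
      exact (((hχs R).continuous.mul (hqs.continuous.mul (pd_smooth hW i).continuous)).sub
        ((hχs R).continuous.mul (pd_smooth hqs i).continuous)).sub ((pd_smooth (hχs R) i).continuous.mul hqs.continuous)
    · refine Eventually.of_forall fun x => ?_
      have e : f x * (χ R x * (q x * pd i W x) - χ R x * pd i q x - pd i (χ R) x * q x) =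
        χ R x * (f x * (q x * pd i W x)) - χ R x * (f x * pd i q x) - pd i (χ R) x * (f x * q x) := by ring
      rw [e]
      refine (norm_sub_le _ _).trans (add_le_add ((norm_sub_le _ _).trans (add_le_add ?_ ?_)) ?_)
      · rw [Real.norm_eq_abs, abs_mul, abs_of_nonneg (hχ0 R x)]
        exact mul_le_of_le_one_left (abs_nonneg _) (hχ1 R x)
      · rw [Real.norm_eq_abs, abs_mul, abs_of_nonneg (hχ0 R x)]
        exact mul_le_of_le_one_left (abs_nonneg _) (hχ1 R x)
      · rw [Real.norm_eq_abs, abs_mul]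
        exact mul_le_mul_of_nonneg_right (hχd R i x) (abs_nonneg _)
    · refine Eventually.of_forall fun x => ?_
      have := ((((hχt x).mul_const (q x * pd i W x)).sub ((hχt x).mul_const (pd i q x))).sub
        ((hχdt i x).mul_const (q x))).const_mul (f x)
      simpa using this
  refine tendsto_nhds_unique lim1 ?_
  simp only [step]; exact lim2

theorem green_lip (hW : ContDiff ℝ (⊤:ℕ∞) W) (hd : Decay W) {f : EE n → ℝ} (hf : LocallyLipschitz f)
    (hf2 : Integrable (fun x => f x ^2) (nu W)) (hD : Integrable (fun x => ‖fderiv ℝ f x‖^2) (nu W))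
    {j : ℕ} {q : EE n → ℝ} (hq : q ∈ PP n (j+1+1)) :
    ∫ x, ∑ i, pd i f x * pd i q x ∂(nu W) = ∫ x, f x * Lop W q x ∂(nu W) := by
  have hWc := hW.continuous
  have mf : MemLp f 2 (nu W) := memLp_of_sq hf.continuous.aestronglyMeasurable hf2
  have I1 : ∀ i, Integrable (fun x => pd i f x * pd i q x) (nu W) := fun i =>
    (pd_memLp hD i).integrable_mul ((PP_GR (PP_pd i hq)).memLp hWc hd (by norm_num))
  have I2 : ∀ i, Integrable (fun x => f x * (pd i q x * pd i W x - pd i (pd i q) x)) (nu W) := fun i =>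
    mf.integrable_mul ((((PP_GR (PP_pd i hq)).mul (GR.pdW hW i)).sub
      ((PP_GR (PP_pd i (PP_pd i hq))).mono (by norm_num))).memLp hWc hd (by norm_num))
  have e : ∀ x, f x * Lop W q x = ∑ i, f x * (pd i q x * pd i W x - pd i (pd i q) x) := fun x => by
    rw [Lop, Finset.mul_sum]
  simp only [e]
  rw [integral_finsetSum _ fun i _ => I1 i, integral_finsetSum _ fun i _ => I2 i]
  exact Finset.sum_congr rfl fun i _ => ibp_lip hW hd hf hf2 hD (PP_pd i hq) i

end


section
variable {n : ℕ}

noncomputable def WG (n : ℕ) (ρ c : ℝ) (x : EE n) : ℝ := ρ / 2 * ‖x‖^2 + c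

theorem WG_smooth (ρ c : ℝ) : ContDiff ℝ (⊤:ℕ∞) (WG n ρ c) :=
  (contDiff_const.mul (contDiff_norm_sq ℝ)).add contDiff_const

theorem WG_fderiv (ρ c : ℝ) (x v : EE n) : fderiv ℝ (WG n ρ c) x v = ρ * inner ℝ x v := by
  have h1 : HasFDerivAt (WG n ρ c) ((ρ/2) • (2 • (innerSL ℝ x))) x :=
    (((hasStrictFDerivAt_norm_sq x).hasFDerivAt).const_mul (ρ/2)).add_const c
  rw [h1.fderiv]; simp; ring

theorem WG_pd (ρ c : ℝ) (i : Fin n) (x : EE n) : pd i (WG n ρ c) x = ρ * x i := by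
  rw [pd, WG_fderiv, ebas, EuclideanSpace.inner_single_right]; simp

theorem poly_exp (N : ℕ) {r : ℝ} (hr : 0 ≤ r) : (1 + r)^N * Real.exp (-r) ≤ Real.exp 1 * N.factorial := by
  have h6 := Real.pow_div_factorial_le_exp (1 + r) (by positivity) N
  rw [div_le_iff₀ (by positivity), Real.exp_add] at h6
  rw [Real.exp_neg, ← div_eq_mul_inv, div_le_iff₀ (Real.exp_pos _)]
  linarith

theorem WG_exp {ρ : ℝ} (hρ : 0 < ρ) (c A : ℝ) (x : EE n) :
    Real.exp (A * ‖x‖) * Real.exp (-(WG n ρ c x)) ≤ Real.exp ((A+1)^2/(2*ρ) - c) * Real.exp (-‖x‖) := by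
  rw [← Real.exp_add, ← Real.exp_add, Real.exp_le_exp, WG]
  have : 0 ≤ (ρ * ‖x‖ - (A+1))^2 / (2*ρ) := by positivity
  have e : (ρ * ‖x‖ - (A+1))^2 / (2*ρ) = ρ/2 * ‖x‖^2 - (A+1) * ‖x‖ + (A+1)^2/(2*ρ) := by
    field_simp; ring
  rw [e] at this
  linarith

theorem WG_decay {ρ : ℝ} (hρ : 0 < ρ) (c : ℝ) : Decay (WG n ρ c) := by
  intro N
  refine ⟨(1+ρ)^2 * Real.exp ((0+1)^2/(2*ρ) - c) * (Real.exp 1 * (N+2).factorial), fun x => ?_⟩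
  have h1 : ‖fderiv ℝ (WG n ρ c) x‖ ≤ ρ * ‖x‖ := by
    refine ContinuousLinearMap.opNorm_le_bound _ (by positivity) fun v => ?_
    rw [WG_fderiv, norm_mul, Real.norm_of_nonneg hρ.le, mul_assoc]
    exact mul_le_mul_of_nonneg_left (norm_inner_le_norm _ _) hρ.le
  have h2 : (1 + ‖fderiv ℝ (WG n ρ c) x‖)^2 ≤ (1+ρ)^2 * (1 + ‖x‖)^2 := by
    rw [← mul_pow]
    refine pow_le_pow_left₀ (by positivity) ?_ 2
    nlinarith [norm_nonneg x]
  have h3 := WG_exp hρ c 0 x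
  rw [zero_mul, Real.exp_zero, one_mul] at h3
  have h4 := poly_exp (N+2) (norm_nonneg x)
  calc _ ≤ (1+‖x‖)^N * ((1+ρ)^2 * (1 + ‖x‖)^2) * (Real.exp ((0+1)^2/(2*ρ) - c) * Real.exp (-‖x‖)) := by
        refine mul_le_mul ?_ h3 (Real.exp_pos _).le (by positivity)
        exact mul_le_mul_of_nonneg_left h2 (by positivity)
    _ = (1+ρ)^2 * Real.exp ((0+1)^2/(2*ρ) - c) * ((1+‖x‖)^(N+2) * Real.exp (-‖x‖)) := by ring
    _ ≤ _ := mul_le_mul_of_nonneg_left h4 (by positivity)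

theorem WG_expint {ρ : ℝ} (hρ : 0 < ρ) (c A : ℝ) : Integrable (fun x => Real.exp (A * ‖x‖)) (nu (WG n ρ c)) := by
  have hWc := (WG_smooth (n := n) ρ c).continuous
  rw [integrable_nu hWc]
  refine ((integrable_decay n).const_mul (Real.exp ((A+1)^2/(2*ρ) - c) * (Real.exp 1 * (n+1).factorial))).mono' ?_ ?_
  · exact Continuous.aestronglyMeasurable (by fun_prop)
  · refine Eventually.of_forall fun x => ?_
    rw [Real.norm_of_nonneg (by positivity)]
    refine (WG_exp hρ c A x).trans ?_
    rw [mul_assoc]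
    refine mul_le_mul_of_nonneg_left ?_ (Real.exp_pos _).le
    rw [← div_eq_mul_inv, le_div_iff₀ (by positivity), mul_comm]
    exact poly_exp (n+1) (norm_nonneg x)

theorem nu_finite {W : EE n → ℝ} (hW : Continuous W) (hd : Decay W) : IsFiniteMeasure (nu W) := by
  have : Integrable (fun _ : EE n => (1:ℝ)) (nu W) := (GR.const (W := W) 1).integrable hW hd (by norm_num)
  exact (integrable_const_iff_isFiniteMeasure one_ne_zero).1 this

theorem nu_openPos {W : EE n → ℝ} (hW : Continuous W) : (nu W).IsOpenPosMeasure := by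
  have : (volume : Measure (EE n)) ≪ nu W :=
    withDensity_absolutelyContinuous' (meas_dens hW).aemeasurable (Eventually.of_forall fun x => by
      simp [Real.exp_pos])
  exact this.isOpenPosMeasure

theorem completeness {ρ : ℝ} (hρ : 0 < ρ) (c : ℝ) {h : EE n → ℝ} (hm : Measurable h)
    (h2 : MemLp h 2 (nu (WG n ρ c))) (ho : ∀ j, ∀ q ∈ PP n j, ∫ x, h x * q x ∂(nu (WG n ρ c)) = 0) :
    h =ᵐ[nu (WG n ρ c)] 0 := by
  set ν := nu (WG n ρ c) with hν
  have hfin : IsFiniteMeasure ν := nu_finite (WG_smooth ρ c).continuous (WG_decay hρ c)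
  have h1 : Integrable h ν := h2.integrable (by norm_num)
  have key : ∀ t : EE n, ∫ x, (h x : ℂ) * Complex.exp (inner ℝ x t * Complex.I) ∂ν = 0 := by
    intro t
    have me : MemLp (fun x => Real.exp (‖t‖ * ‖x‖)) 2 ν := by
      refine memLp_of_sq (Continuous.aestronglyMeasurable (by fun_prop)) ?_
      have := WG_expint (n := n) hρ c (2 * ‖t‖)
      refine this.congr (Eventually.of_forall fun x => ?_)
      simp only
      rw [← Real.exp_nat_mul]; push_cast; ring_nf
    have hs := hasSum_integral_of_dominated_convergence (μ := ν)
      (F := fun (d : ℕ) x => (h x : ℂ) * ((inner ℝ x t * Complex.I)^d / d.factorial))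
      (f := fun x => (h x : ℂ) * Complex.exp (inner ℝ x t * Complex.I))
      (bound := fun d x => |h x| * ((‖t‖ * ‖x‖)^d / d.factorial)) ?_ ?_ ?_ ?_ ?_
    · have hz : ∀ d : ℕ, ∫ x, (h x : ℂ) * ((inner ℝ x t * Complex.I)^d / d.factorial) ∂ν = 0 := by
        intro d
        have e : ∀ x, (h x : ℂ) * ((inner ℝ x t * Complex.I)^d / d.factorial) =
            (Complex.I^d / d.factorial) * ((h x * (∑ i, t i * x i)^d : ℝ) : ℂ) := by
          intro x
          have : inner ℝ x t = ∑ i, t i * x i := by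
            rw [PiLp.inner_apply]; simp
          rw [this]; push_cast; rw [mul_pow]; ring
        simp only [e]
        have e2 : ∫ x, ((h x * (∑ i, t i * x i)^d : ℝ) : ℂ) ∂ν = ((∫ x, h x * (∑ i, t i * x i)^d ∂ν : ℝ) : ℂ) :=
          integral_ofReal (𝕜 := ℂ)
        rw [integral_const_mul, e2, ho _ _ (PP_lin_pow t d)]; simp
      simp only [hz] at hs
      exact hs.unique hasSum_zero
    · intro d
      refine Measurable.aestronglyMeasurable ?_
      have : Measurable (fun x : EE n => inner ℝ x t) := (by fun_prop : Continuous (fun x : EE n => inner ℝ x t)).measurable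
      fun_prop
    · intro d
      refine Eventually.of_forall fun x => ?_
      rw [norm_mul, norm_div, norm_pow, norm_mul, Complex.norm_I, mul_one, Complex.norm_real, Complex.norm_real, Complex.norm_natCast]
      refine mul_le_mul_of_nonneg_left ?_ (norm_nonneg _)
      refine div_le_div_of_nonneg_right (pow_le_pow_left₀ (norm_nonneg _) ?_ d) (by positivity)
      rw [mul_comm]; exact norm_inner_le_norm x t
    · refine Eventually.of_forall fun x => ?_
      exact (Real.summable_pow_div_factorial _).mul_left _
    · have : (fun x => ∑' d : ℕ, |h x| * ((‖t‖ * ‖x‖)^d / d.factorial)) = fun x => |h x| * Real.exp (‖t‖ * ‖x‖) := by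
        ext x
        rw [tsum_mul_left, Real.exp_eq_exp_ℝ, NormedSpace.exp_eq_tsum_div]
      rw [this]
      exact h2.abs.integrable_mul me
    · refine Eventually.of_forall fun x => HasSum.mul_left _ ?_
      rw [Complex.exp_eq_exp_ℂ]
      exact NormedSpace.expSeries_div_hasSum_exp _
  have ft : ∀ g : EE n → ℝ, Integrable g ν → ∫⁻ x, ENNReal.ofReal (g x) ∂ν ≠ ⊤ := fun g hg => hg.lintegral_lt_top.ne
  have f1 : IsFiniteMeasure (ν.withDensity fun x => ENNReal.ofReal (h x)) := isFiniteMeasure_withDensity (ft h h1)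
  have f2 : IsFiniteMeasure (ν.withDensity fun x => ENNReal.ofReal (- h x)) := isFiniteMeasure_withDensity (ft _ h1.neg)
  have hi : ∀ g : EE n → ℝ, Measurable g → Integrable g ν → ∀ t : EE n,
      Integrable (fun x => (ENNReal.ofReal (g x)).toReal • Complex.exp (inner ℝ x t * Complex.I)) ν := by
    intro g hgm hg t
    refine hg.abs.mono' ?_ (Eventually.of_forall fun x => ?_)
    · refine Measurable.aestronglyMeasurable ?_
      have : Measurable (fun x : EE n => inner ℝ x t) := (by fun_prop : Continuous (fun x : EE n => inner ℝ x t)).measurable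
      fun_prop
    · rw [norm_smul, Complex.norm_exp_ofReal_mul_I, mul_one, ENNReal.toReal_ofReal', Real.norm_of_nonneg (le_max_right _ _)]
      exact max_le (le_abs_self _) (abs_nonneg _)
  have heq : (ν.withDensity fun x => ENNReal.ofReal (h x)) = ν.withDensity fun x => ENNReal.ofReal (- h x) := by
    refine Measure.ext_of_charFun ?_
    ext t
    rw [charFun_apply, charFun_apply, integral_withDensity_eq_integral_toReal_smul (by fun_prop) (by simp),
      integral_withDensity_eq_integral_toReal_smul (by fun_prop) (by simp), ← sub_eq_zero, ← integral_sub, ← key t]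
    · refine integral_congr_ae (Eventually.of_forall fun x => ?_)
      simp only
      rw [← sub_smul, ENNReal.toReal_ofReal', ENNReal.toReal_ofReal', max_zero_sub_max_neg_zero_eq_self]
      simp
    · exact hi h hm h1 t
    · exact hi _ hm.neg h1.neg t
  rw [withDensity_eq_iff (by fun_prop) (by fun_prop) (ft h h1)] at heq
  filter_upwards [heq] with x hx
  have := congrArg ENNReal.toReal hx
  rw [ENNReal.toReal_ofReal', ENNReal.toReal_ofReal'] at this
  have h3 := max_zero_sub_max_neg_zero_eq_self (h x)
  simp; linarith

end


section
variable {n : ℕ}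

theorem iadd {μ : Measure (EE n)} {f g : EE n → ℝ} (hf : Integrable f μ) (hg : Integrable g μ) :
    Integrable (fun x => f x + g x) μ := hf.add hg

theorem Lop_WG (ρ c : ℝ) {M : ℕ} {q : EE n → ℝ} (hq : q ∈ PP n (M+1)) :
    (fun x => Lop (WG n ρ c) q x - ρ * M * q x) ∈ PP n M := by
  have h1 := (PP n M).smul_mem ρ (PP_euler hq)
  have h2 : (∑ i, pd i (pd i q)) ∈ PP n M := Submodule.sum_mem _ fun i _ =>
    PP_pd i (PP_mono_succ _ (PP_pd i hq))
  have := (PP n M).sub_mem h1 h2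
  convert this using 1
  ext x
  simp only [Lop, WG_pd, Pi.sub_apply, Pi.smul_apply, smul_eq_mul, Finset.sum_apply, sum_coord_pd,
    Finset.sum_sub_distrib]
  have : ∑ i, pd i q x * (ρ * x i) = ρ * ∑ i, x i * pd i q x := by
    rw [Finset.mul_sum]; exact Finset.sum_congr rfl fun i _ => by ring
  rw [this]; ring

theorem Lop_WG_mem (ρ c : ℝ) {M : ℕ} {q : EE n → ℝ} (hq : q ∈ PP n M) :
    (fun x => Lop (WG n ρ c) q x) ∈ PP n M := by
  cases M with
  | zero =>
    rw [PP_zero hq]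
    have : (fun x => Lop (WG n ρ c) (0 : EE n → ℝ) x) = 0 := by
      have e : ∀ i : Fin n, pd i (0 : EE n → ℝ) = 0 := fun i => by ext x; exact pd_const i 0 x
      ext x; simp [Lop, e]
    rw [this]; exact Submodule.zero_mem _
  | succ M =>
    have := (PP n (M+1)).add_mem (PP_mono_succ _ (Lop_WG ρ c hq)) ((PP n (M+1)).smul_mem (ρ * M) hq)
    convert this using 1
    ext x; simp

theorem Lop_add {W : EE n → ℝ} {f g : EE n → ℝ} (hf : ContDiff ℝ (⊤:ℕ∞) f) (hg : ContDiff ℝ (⊤:ℕ∞) g) (x : EE n) :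
    Lop W (fun x => f x + g x) x = Lop W f x + Lop W g x := by
  have e1 : ∀ i, pd i (fun x => f x + g x) = fun x => pd i f x + pd i g x := fun i => by
    ext y; exact pd_add i (smooth_diff hf y) (smooth_diff hg y)
  simp only [Lop, e1]
  rw [← Finset.sum_add_distrib]
  refine Finset.sum_congr rfl fun i _ => ?_
  rw [pd_add i (smooth_diff (pd_smooth hf i) x) (smooth_diff (pd_smooth hg i) x)]; ring

theorem iPP {W : EE n → ℝ} (hW : Continuous W) (hd : Decay W) {j k : ℕ} {p q : EE n → ℝ} (hp : p ∈ PP n j)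
    (hq : q ∈ PP n k) : Integrable (fun x => p x * q x) (nu W) :=
  ((PP_GR hp).mul (PP_GR hq)).integrable hW hd (by norm_num)

theorem mPP {W : EE n → ℝ} (hW : Continuous W) (hd : Decay W) {j : ℕ} {p : EE n → ℝ} (hp : p ∈ PP n j) :
    MemLp p 2 (nu W) := (PP_GR hp).memLp hW hd (by norm_num)

theorem inner_toLp {μ : Measure (EE n)} {f g : EE n → ℝ} (hf : MemLp f 2 μ) (hg : MemLp g 2 μ) :
    inner ℝ (hf.toLp f) (hg.toLp g) = ∫ x, f x * g x ∂μ := by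
  rw [L2.inner_def]
  refine integral_congr_ae ?_
  filter_upwards [hf.coeFn_toLp, hg.coeFn_toLp] with x h1 h2
  rw [h1, h2]; simp [mul_comm]

noncomputable def TPP {W : EE n → ℝ} (hW : Continuous W) (hd : Decay W) (M : ℕ) : PP n M →ₗ[ℝ] Lp ℝ 2 (nu W) where
  toFun q := (mPP hW hd q.2).toLp q.1
  map_add' _ _ := rfl
  map_smul' _ _ := rfl

theorem proj {ρ : ℝ} (hρ : 0 < ρ) (c : ℝ) {f : EE n → ℝ} (hf : MemLp f 2 (nu (WG n ρ c))) :
    ∃ p : ℕ → EE n → ℝ, (∀ M, p M ∈ PP n M) ∧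
      (∀ M, ∀ q ∈ PP n M, ∫ x, (f x - p M x) * q x ∂(nu (WG n ρ c)) = 0) ∧
      Tendsto (fun M => ∫ x, (p M x)^2 ∂(nu (WG n ρ c))) atTop (𝓝 (∫ x, (f x)^2 ∂(nu (WG n ρ c)))) := by
  have hW := (WG_smooth (n := n) ρ c).continuous
  have hd := WG_decay (n := n) hρ c
  let S : ℕ → Submodule ℝ (Lp ℝ 2 (nu (WG n ρ c))) := fun M => LinearMap.range (TPP hW hd M)
  have hS : Monotone S := by
    intro a b hab
    rintro _ ⟨q, rfl⟩
    exact ⟨⟨q.1, PP_mono hab q.2⟩, rfl⟩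
  have hdense : (⊤ : Submodule ℝ (Lp ℝ 2 (nu (WG n ρ c)))) ≤ (⨆ t, S t).topologicalClosure := by
    refine ge_of_eq ?_
    rw [Submodule.topologicalClosure_eq_top_iff, Submodule.eq_bot_iff]
    intro h hh
    have hm := (Lp.stronglyMeasurable h).measurable
    have := completeness hρ c hm (Lp.memLp h) ?_
    · exact (Lp.eq_zero_iff_ae_eq_zero).2 this
    · intro j q hq
      have hq' : (mPP hW hd hq).toLp q ∈ ⨆ t, S t := Submodule.mem_iSup_of_mem j ⟨⟨q, hq⟩, rfl⟩
      have h3 := (Submodule.mem_orthogonal' _ _).1 hh _ hq'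
      have h4 := inner_toLp (Lp.memLp h) (mPP hW hd hq)
      rw [Lp.toLp_coeFn] at h4
      rw [← h4, h3]
  have key := Submodule.starProjection_tendsto_self S hS (hf.toLp f) hdense
  have hmem : ∀ M, ∃ q : PP n M, TPP hW hd M q = (S M).starProjection (hf.toLp f) := fun M =>
    (S M).starProjection_apply_mem (hf.toLp f)
  choose q hq using hmem
  refine ⟨fun M => (q M).1, fun M => (q M).2, fun M r hr => ?_, ?_⟩
  · have h1 := (S M).sub_starProjection_mem_orthogonal (hf.toLp f)
    rw [← hq] at h1
    have h2 := (Submodule.mem_orthogonal' _ _).1 h1 _ ⟨⟨r, hr⟩, rfl⟩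
    exact (inner_toLp (hf.sub (mPP hW hd (q M).2)) (mPP hW hd hr)).symm.trans h2
  · have h1 := key.inner (𝕜 := ℝ) key
    rw [inner_toLp] at h1
    have e : (fun M => inner ℝ ((S M).starProjection (hf.toLp f)) ((S M).starProjection (hf.toLp f))) =
        fun M => ∫ x, ((q M).1 x)^2 ∂(nu (WG n ρ c)) := by
      ext M
      rw [← hq M]
      refine (inner_toLp (mPP hW hd (q M).2) (mPP hW hd (q M).2)).trans ?_
      simp only [sq]
    rw [e] at h1
    simpa only [sq] using h1

theorem poly_spec {ρ : ℝ} (hρ : 0 < ρ) (c : ℝ) (m M : ℕ) : ∀ {p : EE n → ℝ}, p ∈ PP n M →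
    (∀ q ∈ PP n m, ∫ x, p x * q x ∂(nu (WG n ρ c)) = 0) →
    ρ * m * ∫ x, (p x)^2 ∂(nu (WG n ρ c)) ≤ ∫ x, p x * Lop (WG n ρ c) p x ∂(nu (WG n ρ c)) := by
  have hWs := (WG_smooth (n := n) ρ c)
  have hW := hWs.continuous
  have hd := WG_decay (n := n) hρ c
  induction M with
  | zero => intro p hp _; rw [PP_zero hp]; simp
  | succ M ih =>
    intro p hp ho
    by_cases hm : M + 1 ≤ m
    · have h0 := ho p (PP_mono hm hp)
      simp only [sq]
      rw [h0, mul_zero, ← green hWs hd (PP_mono_succ _ hp) hp]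
      exact integral_nonneg fun x => Finset.sum_nonneg fun i _ => mul_self_nonneg _
    · obtain ⟨P, hP, hPo, -⟩ := proj hρ c (mPP hW hd hp)
      obtain ⟨r, hr, hro⟩ : ∃ r, r ∈ PP n M ∧ ∀ q ∈ PP n M, ∫ x, (p x - r x) * q x ∂(nu (WG n ρ c)) = 0 :=
        ⟨P M, hP M, hPo M⟩
      have hr1 := PP_mono_succ _ hr
      obtain ⟨h, hh⟩ : ∃ h : EE n → ℝ, h = fun x => p x - r x := ⟨_, rfl⟩
      have hhm : h ∈ PP n (M+1) := by rw [hh]; exact (PP n (M+1)).sub_mem hp hr1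
      have hho : ∀ q ∈ PP n M, ∫ x, h x * q x ∂(nu (WG n ρ c)) = 0 := by rw [hh]; exact hro
      have hp' : p = fun x => r x + h x := by rw [hh]; ext x; ring
      have hrm : ∀ q ∈ PP n m, ∫ x, r x * q x ∂(nu (WG n ρ c)) = 0 := by
        intro q hq
        have e : ∀ x, r x * q x = p x * q x - h x * q x := fun x => by rw [hp']; ring
        simp only [e]
        rw [integral_sub (iPP hW hd hp hq) (iPP hW hd hhm hq), ho q hq, hho q (PP_mono (by omega) hq), sub_zero]
      have i1 := ih hr hrm
      have hLr := Lop_WG_mem ρ c hr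
      have hLh := Lop_WG_mem ρ c hhm
      have c1 := hho _ hLr
      have c2 : ∫ x, r x * Lop (WG n ρ c) h x ∂(nu (WG n ρ c)) = 0 := by
        rw [← c1, ← green hWs hd (PP_mono_succ _ hhm) hr1, ← green hWs hd (PP_mono_succ _ hr1) hhm]
        simp only [mul_comm]
      have c3 : ∫ x, h x * Lop (WG n ρ c) h x ∂(nu (WG n ρ c)) = ρ * M * ∫ x, h x ^2 ∂(nu (WG n ρ c)) := by
        have e : ∀ x, h x * Lop (WG n ρ c) h x = h x * (Lop (WG n ρ c) h x - ρ * M * h x) + ρ * M * (h x * h x) :=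
          fun x => by ring
        simp only [e]
        rw [integral_add (iPP hW hd hhm (Lop_WG ρ c hhm)) ((iPP hW hd hhm hhm).const_mul _), hho _ (Lop_WG ρ c hhm),
          integral_const_mul, zero_add]
        simp only [sq]
      have c4 := hho r hr
      have e1 : ∫ x, p x ^2 ∂(nu (WG n ρ c)) = ∫ x, r x ^2 ∂(nu (WG n ρ c)) + ∫ x, h x ^2 ∂(nu (WG n ρ c)) := by
        have e : ∀ x, p x ^2 = (r x * r x + h x * h x) + 2 * (h x * r x) := fun x => by rw [hp']; ring
        simp only [e]
        rw [integral_add (iadd (iPP hW hd hr hr) (iPP hW hd hhm hhm)) ((iPP hW hd hhm hr).const_mul _),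
          integral_add (iPP hW hd hr hr) (iPP hW hd hhm hhm), integral_const_mul, c4]
        simp only [sq]; ring
      have e2 : ∫ x, p x * Lop (WG n ρ c) p x ∂(nu (WG n ρ c)) = ∫ x, r x * Lop (WG n ρ c) r x ∂(nu (WG n ρ c)) +
          ρ * M * ∫ x, h x ^2 ∂(nu (WG n ρ c)) := by
        have e : ∀ x, p x * Lop (WG n ρ c) p x = (r x * Lop (WG n ρ c) r x + h x * Lop (WG n ρ c) h x)
            + (r x * Lop (WG n ρ c) h x + h x * Lop (WG n ρ c) r x) := fun x => by
          rw [hp', Lop_add (PP_smooth hr) (PP_smooth hhm)]; ring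
        simp only [e]
        rw [integral_add (iadd (iPP hW hd hr hLr) (iPP hW hd hhm hLh)) (iadd (iPP hW hd hr hLh) (iPP hW hd hhm hLr)),
          integral_add (iPP hW hd hr hLr) (iPP hW hd hhm hLh), integral_add (iPP hW hd hr hLh) (iPP hW hd hhm hLr),
          c1, c2, c3]
        ring
      rw [e1, e2]
      have h2 : 0 ≤ ∫ x, h x ^2 ∂(nu (WG n ρ c)) := integral_nonneg fun x => sq_nonneg _
      have hmM : (m:ℝ) ≤ M := by exact_mod_cast (by omega : m ≤ M)
      have : ρ * m * ∫ x, h x ^2 ∂(nu (WG n ρ c)) ≤ ρ * M * ∫ x, h x ^2 ∂(nu (WG n ρ c)) := by gcongr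
      linarith

theorem lip_spec {ρ : ℝ} (hρ : 0 < ρ) (c : ℝ) (m : ℕ) {f : EE n → ℝ} (hf : LocallyLipschitz f)
    (hf2 : Integrable (fun x => f x ^2) (nu (WG n ρ c))) (hD : Integrable (fun x => ‖fderiv ℝ f x‖^2) (nu (WG n ρ c)))
    (ho : ∀ q ∈ PP n m, ∫ x, f x * q x ∂(nu (WG n ρ c)) = 0) :
    ρ * m * ∫ x, (f x)^2 ∂(nu (WG n ρ c)) ≤ ∫ x, ‖fderiv ℝ f x‖^2 ∂(nu (WG n ρ c)) := by
  have hWs := (WG_smooth (n := n) ρ c)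
  have hW := hWs.continuous
  have hd := WG_decay (n := n) hρ c
  have hfm : MemLp f 2 (nu (WG n ρ c)) := memLp_of_sq hf.continuous.aestronglyMeasurable hf2
  obtain ⟨P, hP, hPo, hlim⟩ := proj hρ c hfm
  refine le_of_tendsto (hlim.const_mul (ρ * m)) ?_
  filter_upwards [eventually_ge_atTop m] with M hM
  obtain ⟨p, hpe⟩ : ∃ p, p = P M := ⟨_, rfl⟩
  have hp : p ∈ PP n M := hpe ▸ hP M
  have hpo : ∀ q ∈ PP n M, ∫ x, (f x - p x) * q x ∂(nu (WG n ρ c)) = 0 := by rw [hpe]; exact hPo M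
  rw [← hpe]
  have ifq : ∀ j, ∀ q ∈ PP n j, Integrable (fun x => f x * q x) (nu (WG n ρ c)) := fun j q hq =>
    hfm.integrable_mul (mPP hW hd hq)
  have hfp : ∀ q ∈ PP n M, ∫ x, f x * q x ∂(nu (WG n ρ c)) = ∫ x, p x * q x ∂(nu (WG n ρ c)) := by
    intro q hq
    have := hpo q hq
    simp only [sub_mul] at this
    rw [integral_sub (ifq _ q hq) (iPP hW hd hp hq)] at this
    linarith
  have h1 := poly_spec hρ c m M hp (fun q hq => by rw [← hfp q (PP_mono hM hq), ho q hq])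
  refine h1.trans ?_
  have hp2 : p ∈ PP n (M+1+1) := PP_mono (by omega) hp
  have hp1 : p ∈ PP n (M+1) := PP_mono (by omega) hp
  have g1 := green hWs hd hp2 hp1
  have g2 := green_lip hWs hd hf hf2 hD hp2
  rw [hfp _ (Lop_WG_mem ρ c hp)] at g2
  have j1 : Integrable (fun x => ∑ i, pd i p x * pd i p x) (nu (WG n ρ c)) := integrable_finsetSum _ fun i _ =>
    iPP hW hd (PP_pd i hp1) (PP_pd i hp1)
  have j2 : Integrable (fun x => ∑ i, pd i f x * pd i p x) (nu (WG n ρ c)) := integrable_finsetSum _ fun i _ =>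
    (pd_memLp hD i).integrable_mul (mPP hW hd (PP_pd i hp1))
  have h0 : 0 ≤ ∫ x, ∑ i, (pd i f x - pd i p x)^2 ∂(nu (WG n ρ c)) :=
    integral_nonneg fun x => Finset.sum_nonneg fun i _ => sq_nonneg _
  have e : ∀ x, ∑ i, (pd i f x - pd i p x)^2 = (‖fderiv ℝ f x‖^2 + ∑ i, pd i p x * pd i p x) - 2 * ∑ i, pd i f x * pd i p x := by
    intro x
    rw [norm_fderiv_sq, Finset.mul_sum, ← Finset.sum_add_distrib, ← Finset.sum_sub_distrib]
    exact Finset.sum_congr rfl fun i _ => by ring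
  simp only [e] at h0
  rw [integral_sub (iadd hD j1) (j2.const_mul 2), integral_add hD j1, integral_const_mul, g1, g2] at h0
  linarith

end


section
variable {n : ℕ} {W : EE n → ℝ}

theorem int_of_lint {μ : Measure (EE n)} {f : EE n → ℝ} (hm : AEStronglyMeasurable f μ) (h0 : ∀ x, 0 ≤ f x)
    (h : ∫⁻ x, ENNReal.ofReal (f x) ∂μ < ⊤) : Integrable f μ :=
  ⟨hm, (hasFiniteIntegral_iff_ofReal (Eventually.of_forall h0)).2 h⟩

theorem meas_fd (f : EE n → ℝ) : Measurable (fun x => ‖fderiv ℝ f x‖^2) :=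
  (measurable_fderiv ℝ f).norm.pow_const 2

theorem W12 (hn : 1 ≤ n) {f : EE n → ℝ} (h : memW12Lip (nu W) f) :
    LocallyLipschitz f ∧ Integrable (fun x => f x ^2) (nu W) ∧ Integrable (fun x => ‖fderiv ℝ f x‖^2) (nu W) ∧
    ∫ x, localLip f x ^2 ∂(nu W) = ∫ x, ‖fderiv ℝ f x‖^2 ∂(nu W) := by
  obtain ⟨hl, hi⟩ := h
  have hae : ∀ᵐ x ∂(nu W), localLip f x = ‖fderiv ℝ f x‖ := by
    filter_upwards [ae_nu (W := W) (ae_diff hl)] with x hx using localLip_eq hn hx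
  have h1 := lt_of_le_of_lt le_self_add hi
  have h2 := lt_of_le_of_lt le_add_self hi
  refine ⟨hl, int_of_lint (hl.continuous.pow 2).aestronglyMeasurable (fun x => sq_nonneg _) h1, ?_, ?_⟩
  · refine int_of_lint (meas_fd f).aestronglyMeasurable (fun x => sq_nonneg _) ?_
    refine lt_of_eq_of_lt (lintegral_congr_ae ?_) h2
    filter_upwards [hae] with x hx
    rw [hx]
  · refine integral_congr_ae ?_
    filter_upwards [hae] with x hx
    rw [hx]

theorem norm_toLp_sq {μ : Measure (EE n)} {f : EE n → ℝ} (hf : MemLp f 2 μ) : ‖hf.toLp f‖^2 = ∫ x, f x ^2 ∂μ := by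
  rw [← real_inner_self_eq_norm_sq, inner_toLp hf hf]; simp only [sq]

theorem sq_zero (hW : Continuous W) {f : EE n → ℝ} (hc : Continuous f) (hi : Integrable (fun x => f x ^2) (nu W))
    (h : ∫ x, f x ^2 ∂(nu W) = 0) : f = 0 := by
  rw [integral_eq_zero_iff_of_nonneg (fun x => sq_nonneg _) hi] at h
  have := nu_openPos hW
  refine ((hc.ae_eq_iff_eq (nu W) continuous_zero)).1 ?_
  filter_upwards [h] with x hx
  simpa using hx

theorem ray_bdd (hn : 1 ≤ n) (hW : Continuous W) (F : Submodule ℝ (EE n → ℝ)) [FiniteDimensional ℝ F]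
    (hF : ∀ f ∈ F, memW12Lip (nu W) f) :
    ∃ C, ∀ f ∈ F, ∫ x, localLip f x ^2 ∂(nu W) ≤ C * ∫ x, f x ^2 ∂(nu W) := by
  have hl := fun f hf => (W12 hn (hF f hf)).1
  have hf2 := fun f hf => (W12 hn (hF f hf)).2.1
  have hD := fun f hf => (W12 hn (hF f hf)).2.2.1
  have hm : ∀ f ∈ F, MemLp f 2 (nu W) := fun f hf => memLp_of_sq (hl f hf).continuous.aestronglyMeasurable (hf2 f hf)
  have hdm : ∀ i, ∀ f ∈ F, MemLp (pd i f) 2 (nu W) := fun i f hf => pd_memLp (hD f hf) i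
  let J : F →ₗ[ℝ] Lp ℝ 2 (nu W) :=
    { toFun := fun f => (hm f.1 f.2).toLp f.1
      map_add' := fun _ _ => rfl
      map_smul' := fun _ _ => rfl }
  let D : Fin n → F →ₗ[ℝ] Lp ℝ 2 (nu W) := fun i =>
    { toFun := fun f => (hdm i f.1 f.2).toLp (pd i f.1)
      map_add' := fun f g => by
        rw [← MemLp.toLp_add]
        refine MemLp.toLp_congr _ _ ?_
        filter_upwards [ae_nu (W := W) (ae_diff (hl f f.2)), ae_nu (W := W) (ae_diff (hl g g.2))] with x h1 h2
        exact pd_add i h1 h2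
      map_smul' := fun c f => by
        simp only [RingHom.id_apply]
        rw [← MemLp.toLp_const_smul]
        refine MemLp.toLp_congr _ _ ?_
        filter_upwards [ae_nu (W := W) (ae_diff (hl f f.2))] with x h1
        exact pd_cmul i c h1 }
  have hJ : Function.Injective J := by
    rw [← LinearMap.ker_eq_bot, LinearMap.ker_eq_bot']
    intro f hf
    have h1 := norm_toLp_sq (hm f.1 f.2)
    have h2 : (hm f.1 f.2).toLp f.1 = 0 := hf
    rw [h2, norm_zero] at h1
    exact Subtype.ext (sq_zero hW (hl f f.2).continuous (hf2 f f.2) (by rw [← h1]; norm_num))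
  let e := LinearEquiv.ofInjective J hJ
  let T : Fin n → (LinearMap.range J →L[ℝ] Lp ℝ 2 (nu W)) := fun i =>
    LinearMap.toContinuousLinearMap (D i ∘ₗ e.symm.toLinearMap)
  have hT : ∀ i f, ‖D i f‖ ≤ ‖T i‖ * ‖J f‖ := by
    intro i f
    have h1 := (T i).le_opNorm (e f)
    have h2 : T i (e f) = D i f := by
      simp [T]
    rw [h2] at h1
    exact h1
  refine ⟨∑ i, ‖T i‖^2, fun f hf => ?_⟩
  rw [(W12 hn (hF f hf)).2.2.2]
  simp only [norm_fderiv_sq]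
  rw [integral_finsetSum _ fun i _ => (hdm i f hf).integrable_sq, Finset.sum_mul]
  refine Finset.sum_le_sum fun i _ => ?_
  rw [← norm_toLp_sq (hdm i f hf), ← norm_toLp_sq (hm f hf), ← mul_pow]
  exact pow_le_pow_left₀ (norm_nonneg _) (hT i ⟨f, hf⟩) 2

theorem lower (hn : 1 ≤ n) {ρ : ℝ} (hρ : 0 < ρ) (c : ℝ) {m k : ℕ} (hk : Module.finrank ℝ (PP n m) < k) :
    ∀ a ∈ lamSet (nu (WG n ρ c)) k, ρ * m ≤ a := by
  rintro a ⟨F, hFk, hF, rfl⟩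
  have hWs := (WG_smooth (n := n) ρ c)
  have hW := hWs.continuous
  have hd := WG_decay (n := n) hρ c
  have : FiniteDimensional ℝ F := Module.finite_of_finrank_pos (by omega)
  have hl := fun f hf => (W12 hn (hF f hf)).1
  have hf2 := fun f hf => (W12 hn (hF f hf)).2.1
  have hD := fun f hf => (W12 hn (hF f hf)).2.2.1
  have hm : ∀ f ∈ F, MemLp f 2 (nu (WG n ρ c)) := fun f hf => memLp_of_sq (hl f hf).continuous.aestronglyMeasurable (hf2 f hf)
  have ii : ∀ f ∈ F, ∀ q ∈ PP n m, Integrable (fun x => f x * q x) (nu (WG n ρ c)) := fun f hf q hq =>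
    (hm f hf).integrable_mul (mPP hW hd hq)
  let Φ : F →ₗ[ℝ] PP n m →ₗ[ℝ] ℝ := LinearMap.mk₂ ℝ (fun f q => ∫ x, f.1 x * q.1 x ∂(nu (WG n ρ c)))
    (fun f g q => by
      rw [← integral_add (ii f f.2 q q.2) (ii g g.2 q q.2)]
      simp [add_mul])
    (fun a f q => by
      rw [smul_eq_mul, ← integral_const_mul]
      simp [mul_assoc])
    (fun f q r => by
      rw [← integral_add (ii f f.2 q q.2) (ii f f.2 r r.2)]
      simp [mul_add])
    (fun a f q => by
      rw [smul_eq_mul, ← integral_const_mul]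
      simp [mul_left_comm])
  have hker : LinearMap.ker Φ ≠ ⊥ := by
    refine LinearMap.ker_ne_bot_of_finrank_lt ?_
    have : Module.finrank ℝ (PP n m →ₗ[ℝ] ℝ) = Module.finrank ℝ (PP n m) := Subspace.dual_finrank_eq
    rw [this, hFk]; exact hk
  obtain ⟨f, hfk, hf0⟩ := Submodule.exists_mem_ne_zero_of_ne_bot hker
  have ho : ∀ q ∈ PP n m, ∫ x, f.1 x * q x ∂(nu (WG n ρ c)) = 0 := fun q hq =>
    LinearMap.congr_fun (LinearMap.mem_ker.1 hfk) ⟨q, hq⟩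
  have hne : ∫ x, f.1 x ^2 ∂(nu (WG n ρ c)) ≠ 0 := fun h =>
    hf0 (Subtype.ext (sq_zero hW (hl f f.2).continuous (hf2 f f.2) h))
  have hpos : 0 < ∫ x, f.1 x ^2 ∂(nu (WG n ρ c)) := lt_of_le_of_ne (integral_nonneg fun x => sq_nonneg _) hne.symm
  obtain ⟨C, hC⟩ := ray_bdd hn hW F hF
  have hb : BddAbove { r : ℝ | ∃ f ∈ F, (∫ x, (f x) ^ 2 ∂(nu (WG n ρ c))) ≠ 0 ∧
      r = (∫ x, (localLip f x) ^ 2 ∂(nu (WG n ρ c))) / (∫ x, (f x) ^ 2 ∂(nu (WG n ρ c))) } := by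
    refine ⟨C, ?_⟩
    rintro r ⟨g, hg, h0, rfl⟩
    rw [div_le_iff₀ (lt_of_le_of_ne (integral_nonneg fun x => sq_nonneg _) h0.symm)]
    exact hC g hg
  refine le_trans ?_ (le_csSup hb ⟨f.1, f.2, hne, rfl⟩)
  rw [le_div_iff₀ hpos, (W12 hn (hF f f.2)).2.2.2]
  exact lip_spec hρ c m (hl f f.2) (hf2 f f.2) (hD f f.2) ho

theorem gauss_eq {ρ : ℝ} (hρ : 0 < ρ) : ∃ c, gaussRho n ρ = nu (WG n ρ c) := by
  have hW := (WG_smooth (n := n) ρ 0).continuous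
  have hfin : IsFiniteMeasure (nu (WG n ρ 0)) := nu_finite hW (WG_decay hρ 0)
  have hop := nu_openPos hW
  have e0 : (volume.withDensity fun x : EE n => ENNReal.ofReal (Real.exp (-ρ * ‖x‖ ^ 2 / 2))) = nu (WG n ρ 0) := by
    rw [nu]; congr 1; ext x; rw [WG]; ring_nf
  have hZt : nu (WG n ρ 0) Set.univ ≠ ⊤ := measure_ne_top _ _
  have hZ0 : nu (WG n ρ 0) Set.univ ≠ 0 := (isOpen_univ.measure_pos _ Set.univ_nonempty).ne'
  have hZp := ENNReal.toReal_pos hZ0 hZt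
  refine ⟨Real.log (nu (WG n ρ 0) Set.univ).toReal, ?_⟩
  have e1 : gaussRho n ρ = (nu (WG n ρ 0) Set.univ)⁻¹ • nu (WG n ρ 0) := by
    rw [← e0]; rfl
  rw [e1]
  set Z := (nu (WG n ρ 0) Set.univ).toReal with hZ
  have e2 : (nu (WG n ρ 0) Set.univ)⁻¹ = ENNReal.ofReal Z⁻¹ := by
    rw [ENNReal.ofReal_inv_of_pos hZp, hZ, ENNReal.ofReal_toReal hZt]
  rw [e2, nu, nu, ← withDensity_smul _ (meas_dens hW)]
  congr 1
  ext x
  rw [Pi.smul_apply, smul_eq_mul, ← ENNReal.ofReal_mul (by positivity)]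
  congr 1
  have : WG n ρ (Real.log Z) x = WG n ρ 0 x + Real.log Z := by simp [WG]
  rw [this, neg_add, Real.exp_add, Real.exp_neg (Real.log Z), Real.exp_log hZp, mul_comm]

end

theorem spectral_comparison_semi_log_convex
    (n : ℕ) (hn : 1 ≤ n) (ρ : ℝ) (hρ : 0 < ρ)
    (V : EuclideanSpace ℝ (Fin n) → ℝ) (hV : ContDiff ℝ (⊤ : ℕ∞) V)
    (hconv : ConvexOn ℝ Set.univ (fun x : EuclideanSpace ℝ (Fin n) => ρ / 2 * ‖x‖ ^ 2 - V x))
    (μ : Measure (EuclideanSpace ℝ (Fin n)))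
    (hμ : μ = volume.withDensity fun x => ENNReal.ofReal (Real.exp (-(V x))))
    [IsProbabilityMeasure μ]
    (k : ℕ) (hk : 1 ≤ k) :
    lambdaLip μ k ≤ lambdaLip (gaussRho n ρ) k := by
  have hμ2 : μ = nu V := hμ
  have hint : ∀ W : EE n → ℝ, Continuous W → IsFiniteMeasure (nu W) → Integrable (fun x => Real.exp (-(W x))) := by
    intro W hW hf
    have := (integrable_nu hW (fun _ => (1:ℝ))).1 (integrable_const 1)
    simpa using this
  have hI : Integrable (fun x => Real.exp (-(V x))) := hint V hV.continuous (hμ2 ▸ inferInstance)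
  obtain ⟨c, hc⟩ := gauss_eq (n := n) hρ
  have hW := (WG_smooth (n := n) ρ c)
  have hIW := hint _ hW.continuous (nu_finite hW.continuous (WG_decay hρ c))
  have hex : ∃ m, k ≤ Module.finrank ℝ (PP n m) := ⟨k, PP_dim hn k⟩
  obtain ⟨m, hm1, hm2⟩ : ∃ m, k ≤ Module.finrank ℝ (PP n (m+1)) ∧ Module.finrank ℝ (PP n m) < k := by
    classical
    have h1 := Nat.find_spec hex
    have h0 : Nat.find hex ≠ 0 := by
      intro h
      rw [h] at h1
      have : PP n 0 = ⊥ := by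
        rw [Submodule.eq_bot_iff]; intro f hf; exact PP_zero hf
      rw [this, finrank_bot] at h1
      omega
    obtain ⟨m, hm⟩ := Nat.exists_eq_succ_of_ne_zero h0
    refine ⟨m, by rw [hm] at h1; exact h1, ?_⟩
    have := Nat.find_min hex (m := m) (by omega)
    omega
  have up : lambdaLip μ k ≤ ρ * m := by
    rw [hμ2]; exact lambda_upper hn hV hρ hconv hI hm1
  refine up.trans ?_
  rw [hc, lambdaLip_eq]
  have hcw : ConvexOn ℝ Set.univ (fun x : EE n => ρ / 2 * ‖x‖ ^ 2 - WG n ρ c x) := by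
    have : (fun x : EE n => ρ / 2 * ‖x‖ ^ 2 - WG n ρ c x) = fun _ => -c := by
      ext x; rw [WG]; ring
    rw [this]; exact convexOn_const _ convex_univ
  obtain ⟨a, ha, -⟩ := upper hn hW hρ one_pos hcw hIW hm1
  exact le_csInf ⟨a, ha⟩ (lower hn hρ c hm2)
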